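/- arXiv:1505.04000 — 7 statements merged into one kernel-verified Lean document; each statement's English description precedes it below -/
import Mathlib

section
/- Let J and L be real symmetric positive definite 3×3 matrices and let k₁ > 0, k₂ > 0 be real numbers. Then the 6×6 real block matrix A = [[0, (1/2)I₃], [−k₁ J⁻¹ L, −k₂ J⁻¹ L]] is Hurwitz, i.e., every eigenvalue of A (over ℂ) has strictly negative real part. -/
open Matrix

/-!
If `(x, y)` is an eigenvector of `[[0, c I], [-M⁻¹ K, -M⁻¹ D]]` for the eigenvalue `μ`, eliminating
`y` gives `(μ² M + μ D + c K) x = 0` with `x ≠ 0`: the eigenvalues are those of a damped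
second-order system. Pairing with `x` yields the scalar equation
`μ² (x* M x) + μ (x* D x) + c (x* K x) = 0` with positive real coefficients, whose roots lie in the
open left half-plane.
-/

open scoped ComplexOrder MatrixOrder

theorem re_neg_of_quadratic_eq_zero {a b c : ℝ} (ha : 0 ≤ a) (hb : 0 < b) (hc : 0 < c) {z : ℂ}
    (hz : z ^ 2 * a + z * b + c = 0) : z.re < 0 := by
  by_contra! hre
  have h_real : (z.re ^ 2 - z.im ^ 2) * a + z.re * b + c = 0 := by
    simpa [pow_two] using congrArg Complex.re hz
  have h_imag : (z.re * z.im + z.im * z.re) * a + z.im * b = 0 := by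
    simpa [pow_two] using congrArg Complex.im hz
  have h_factor : z.im * (2 * z.re * a + b) = 0 := by linear_combination h_imag
  have him : z.im = 0 := (mul_eq_zero.mp h_factor).resolve_right (by positivity)
  have h_pos : 0 < z.re ^ 2 * a + z.re * b + c := by positivity
  simp [him, h_pos.ne'] at h_real

theorem map_nonsing_inv {n F E : Type*} [Fintype n] [DecidableEq n] [Field F] [Field E]
    (f : F →+* E) (A : Matrix n n F) : A⁻¹.map f = (A.map f)⁻¹ := by
  have h_det : (A.map f).det = f A.det := (f.map_det A).symm
  have h_adj : (A.map f).adjugate = A.adjugate.map f := (f.map_adjugate A).symm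
  ext i j
  simp [inv_def, h_det, h_adj]

theorem posDef_map_algebraMap {n 𝕜 : Type*} [Finite n] [RCLike 𝕜] {A : Matrix n n ℝ}
    (hA : A.PosDef) : (A.map (algebraMap ℝ 𝕜)).PosDef := by
  classical
  have := Fintype.ofFinite n
  have h_unit : IsUnit (A.map (algebraMap ℝ 𝕜)) := hA.isUnit.map (algebraMap ℝ 𝕜).mapMatrix
  refine PosSemidef.posDef_iff_isUnit ?_ |>.mpr h_unit
  obtain ⟨S, rfl⟩ := CStarAlgebra.nonneg_iff_eq_star_mul_self.mp hA.posSemidef.nonneg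
  have h_star : (star S).map (algebraMap ℝ 𝕜) = (S.map (algebraMap ℝ 𝕜))ᴴ := by
    ext i j
    simp
  rw [Matrix.map_mul, h_star]
  exact posSemidef_conjTranspose_mul_self _

section QuadraticPencil

variable {n : Type*} [Fintype n]

theorem re_neg_of_quadratic_pencil_mulVec_eq_zero {M D K : Matrix n n ℂ} (hM : M.PosSemidef)
    (hD : D.PosDef) (hK : K.PosDef) {z : ℂ} {x : n → ℂ} (hx : x ≠ 0)
    (h : (z ^ 2 • M + z • D + K) *ᵥ x = 0) : z.re < 0 := by
  obtain ⟨a, ha, hMx⟩ := RCLike.nonneg_iff_exists_ofReal.mp (hM.dotProduct_mulVec_nonneg x)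
  obtain ⟨b, hb, hDx⟩ := RCLike.pos_iff_exists_ofReal.mp (hD.dotProduct_mulVec_pos hx)
  obtain ⟨c, hc, hKx⟩ := RCLike.pos_iff_exists_ofReal.mp (hK.dotProduct_mulVec_pos hx)
  refine re_neg_of_quadratic_eq_zero ha hb hc ?_
  have h_pairing := congrArg (star x ⬝ᵥ ·) h
  simpa [add_mulVec, smul_mulVec, ← hMx, ← hDx, ← hKx] using h_pairing

variable [DecidableEq n]

theorem exists_mulVec_eq_smul_of_mem_spectrum {F : Type*} [Field F] {A : Matrix n n F} {μ : F}
    (hμ : μ ∈ spectrum F A) : ∃ v ≠ 0, A *ᵥ v = μ • v := by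
  rw [← spectrum_toLin', ← Module.End.hasEigenvalue_iff_mem_spectrum] at hμ
  obtain ⟨v, hv⟩ := hμ.exists_hasEigenvector
  exact ⟨v, hv.2, by simpa using hv.apply_eq_smul⟩

theorem exists_quadratic_mulVec_eq_zero_of_mem_spectrum_fromBlocks {F : Type*} [Field F]
    {A B : Matrix n n F} {c μ : F} (hc : c ≠ 0)
    (hμ : μ ∈ spectrum F (fromBlocks 0 (c • (1 : Matrix n n F)) (-A) (-B))) :
    ∃ x ≠ 0, (μ ^ 2 • 1 + μ • B + c • A) *ᵥ x = 0 := by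
  obtain ⟨v, hv, hμv⟩ := exists_mulVec_eq_smul_of_mem_spectrum hμ
  obtain ⟨x, y, rfl⟩ : ∃ x y, v = Sum.elim x y := ⟨_, _, (Sum.elim_comp_inl_inr v).symm⟩
  rw [fromBlocks_mulVec] at hμv
  have h_top : c • y = μ • x := by
    simpa [smul_mulVec, funext_iff] using congrArg (· ∘ Sum.inl) hμv
  have h_bottom : -(A *ᵥ x) - B *ᵥ y = μ • y := by
    simpa [neg_mulVec, funext_iff, sub_eq_add_neg] using congrArg (· ∘ Sum.inr) hμv
  refine ⟨x, ?_, ?_⟩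
  · rintro rfl
    have hy : y = 0 := by simpa [hc] using h_top
    exact hv (by simp [hy])
  · calc (μ ^ 2 • 1 + μ • B + c • A) *ᵥ x
        = μ • (μ • x) + B *ᵥ (μ • x) + c • (A *ᵥ x) := by
          simp [add_mulVec, smul_mulVec, mulVec_smul, pow_two, mul_smul]
      _ = c • (μ • y - (-(A *ᵥ x) - B *ᵥ y)) := by
          rw [← h_top, mulVec_smul, smul_comm μ c y]
          module
      _ = 0 := by rw [h_bottom, sub_self, smul_zero]

theorem limit_state_feedback_matrix_hurwitz_general {M D K : Matrix n n ℂ} (hM : M.PosDef)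
    (hD : D.PosDef) (hK : K.PosDef) {c : ℝ} (hc : 0 < c) :
    ∀ μ ∈ spectrum ℂ
      (fromBlocks 0 (c • (1 : Matrix n n ℂ)) (-(M⁻¹ * K)) (-(M⁻¹ * D))),
      μ.re < 0 := by
  intro μ hμ
  rw [← Complex.coe_smul] at hμ
  obtain ⟨x, hx, h⟩ := exists_quadratic_mulVec_eq_zero_of_mem_spectrum_fromBlocks
    (Complex.ofReal_ne_zero.mpr hc.ne') hμ
  have hM_det : IsUnit M.det := (isUnit_iff_isUnit_det M).mp hM.isUnit
  have h_pencil : (μ ^ 2 • M + μ • D + c • K) *ᵥ x = 0 := by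
    simpa [mul_add, mul_nonsing_inv_cancel_left _ _ hM_det] using congrArg (M *ᵥ ·) h
  exact re_neg_of_quadratic_pencil_mulVec_eq_zero hM.posSemidef hD (hK.smul hc) hx h_pencil

end QuadraticPencil

/-- Let `J` and `L` be real symmetric positive definite 3×3 matrices and
`k₁ > 0`, `k₂ > 0`. Then the 6×6 block matrix
`A = [[0, (1/2)I₃], [−k₁ J⁻¹ L, −k₂ J⁻¹ L]]` is Hurwitz: every complex eigenvalue of `A`
has strictly negative real part. -/
theorem limit_state_feedback_matrix_hurwitz
    (J L : Matrix (Fin 3) (Fin 3) ℝ) (hJ : J.PosDef) (hL : L.PosDef)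
    (k₁ k₂ : ℝ) (hk₁ : 0 < k₁) (hk₂ : 0 < k₂) :
    ∀ μ ∈ spectrum ℂ
      ((Matrix.fromBlocks
        (0 : Matrix (Fin 3) (Fin 3) ℝ) ((1/2 : ℝ) • (1 : Matrix (Fin 3) (Fin 3) ℝ))
        (-(k₁ • (J⁻¹ * L))) (-(k₂ • (J⁻¹ * L)))).map (algebraMap ℝ ℂ)),
      μ.re < 0 := by
  have h := limit_state_feedback_matrix_hurwitz_general (posDef_map_algebraMap hJ)
    (posDef_map_algebraMap (hL.smul hk₂)) (posDef_map_algebraMap (hL.smul hk₁)) one_half_pos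
  simpa [fromBlocks_map, Matrix.map_neg, Matrix.map_smul, ← map_nonsing_inv, ← Matrix.map_mul,
    -Complex.coe_algebraMap] using h
end

section
/- Let J and L be real symmetric positive definite 3×3 matrices and let k₁ > 0, k₂ > 0, α > 0, λ > 0 be real numbers. Then the 10×10 real block matrix A = [[0, (1/2)I₃, 0, 0], [−k₁ J⁻¹ L, 0, −(1/2) k₂ α λ J⁻¹ L, 0], [0, (1/2)I₃, −α λ I₃, 0], [0, 0, 0, −α λ]] (where the first three diagonal blocks are 3×3 and the last is 1×1) is Hurwitz, i.e., every eigenvalue of A has strictly negative real part. -/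
open Matrix

/-!
In `outputFeedbackMatrix m K b k c a`, an eigenvector with block components `x, w, z, s` for an
eigenvalue `μ ≠ -a` has `s = 0`, and eliminating `w` and `z` leaves
`b (k (μ + a) + c μ) K x = -μ² (μ + a) x` with `x ≠ 0`. Hence `μ` is a root of
`X³ + a X² + b (k + c) σ X + a b k σ` for some eigenvalue `σ` of `K`. When `K = J⁻¹ L`, pairing
`L x = σ J x` with `x` shows `σ > 0`, and then the Routh–Hurwitz inequality
`a · b (k + c) σ > a b k σ` holds because `c > 0`.
-/

theorem mem_spectrum_iff_exists_mulVec_eq_smul {n F : Type*} [Fintype n] [DecidableEq n] [Field F]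
    {A : Matrix n n F} {μ : F} : μ ∈ spectrum F A ↔ ∃ v ≠ 0, A *ᵥ v = μ • v := by
  rw [← Matrix.spectrum_toLin', ← Module.End.hasEigenvalue_iff_mem_spectrum]
  constructor
  · intro h
    obtain ⟨v, hv⟩ := h.exists_hasEigenvector
    exact ⟨v, hv.2, hv.apply_eq_smul⟩
  · rintro ⟨v, hv, hAv⟩
    exact Module.End.hasEigenvalue_of_hasEigenvector
      ⟨Module.End.mem_eigenspace_iff.mpr hAv, hv⟩

section PositiveDefinite

open scoped ComplexOrder

variable {n 𝕜 : Type*} [RCLike 𝕜]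

open scoped MatrixOrder in
theorem posDef_map_algebraMap_s1 [Finite n] {J : Matrix n n ℝ} (hJ : J.PosDef) :
    (J.map (algebraMap ℝ 𝕜)).PosDef := by
  classical
  cases nonempty_fintype n
  have hpos : (J.map (algebraMap ℝ 𝕜)).PosSemidef := by
    obtain ⟨B, rfl⟩ := CStarAlgebra.nonneg_iff_eq_star_mul_self.mp hJ.posSemidef.nonneg
    rw [Matrix.map_mul, star_eq_conjTranspose, conjTranspose_map _ fun r => by simp]
    exact posSemidef_conjTranspose_mul_self _
  exact hpos.posDef_iff_isUnit.mpr (hJ.isUnit.map (algebraMap ℝ 𝕜).mapMatrix)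

variable [Fintype n] [DecidableEq n]

theorem pos_of_mem_spectrum_of_posDef_mul {J K : Matrix n n 𝕜} (hJ : J.PosDef)
    (hJK : (J * K).PosDef) {σ : 𝕜} (hσ : σ ∈ spectrum 𝕜 K) : 0 < σ := by
  obtain ⟨x, hx, hKx⟩ := mem_spectrum_iff_exists_mulVec_eq_smul.mp hσ
  have hJx : 0 < star x ⬝ᵥ (J *ᵥ x) := hJ.dotProduct_mulVec_pos hx
  have hJKx : 0 < σ * (star x ⬝ᵥ (J *ᵥ x)) := by
    simpa only [← mulVec_mulVec, hKx, mulVec_smul, dotProduct_smul, smul_eq_mul]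
      using hJK.dotProduct_mulVec_pos hx
  exact (pos_iff_pos_of_mul_pos hJKx).mpr hJx

theorem pos_of_mem_spectrum_map_inv_mul {J L : Matrix n n ℝ} (hJ : J.PosDef) (hL : L.PosDef)
    {σ : 𝕜} (hσ : σ ∈ spectrum 𝕜 ((J⁻¹ * L).map (algebraMap ℝ 𝕜))) : 0 < σ := by
  refine pos_of_mem_spectrum_of_posDef_mul (posDef_map_algebraMap_s1 hJ) ?_ hσ
  rw [← Matrix.map_mul, mul_nonsing_inv_cancel_left _ _ hJ.det_pos.ne'.isUnit]
  exact posDef_map_algebraMap_s1 hL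

end PositiveDefinite

theorem re_neg_of_cubic_eq_zero {a₀ a₁ a₂ : ℝ} (h₀ : 0 < a₀) (h₂ : 0 < a₂) (h : a₀ < a₁ * a₂)
    {μ : ℂ} (hμ : μ ^ 3 + a₂ * μ ^ 2 + a₁ * μ + a₀ = 0) : μ.re < 0 := by
  have h₁ : 0 < a₁ := pos_of_mul_pos_left (h₀.trans h) h₂.le
  by_contra! hu
  obtain ⟨u, v⟩ := μ
  have hre : u ^ 3 - 3 * u * v ^ 2 + a₂ * (u ^ 2 - v ^ 2) + a₁ * u + a₀ = 0 := by
    have := congrArg Complex.re hμ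
    simp only [pow_succ, pow_zero, one_mul, Complex.add_re, Complex.mul_re, Complex.mul_im,
      Complex.ofReal_re, Complex.ofReal_im, zero_mul, sub_zero, Complex.zero_re] at this
    linear_combination this
  have him : v * (3 * u ^ 2 - v ^ 2 + 2 * a₂ * u + a₁) = 0 := by
    have := congrArg Complex.im hμ
    simp only [pow_succ, pow_zero, one_mul, Complex.add_im, Complex.mul_im, Complex.mul_re,
      Complex.ofReal_re, Complex.ofReal_im, zero_mul, add_zero, Complex.zero_im] at this
    linear_combination this
  change 0 ≤ u at hu
  rcases mul_eq_zero.mp him with rfl | hv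
  · have : 0 < u ^ 3 + a₂ * u ^ 2 + a₁ * u + a₀ := by positivity
    linarith
  · have hsum : 8 * u ^ 3 + 8 * a₂ * u ^ 2 + 2 * (a₁ + a₂ ^ 2) * u + (a₁ * a₂ - a₀) = 0 := by
      linear_combination (3 * u + a₂) * hv - hre
    have : 0 ≤ 8 * u ^ 3 + 8 * a₂ * u ^ 2 + 2 * (a₁ + a₂ ^ 2) * u := by positivity
    linarith

section OutputFeedback

variable {n m : Type*} [DecidableEq n] [DecidableEq m]

variable (m) in
/-- The closed-loop matrix of an output feedback through an observer, with `K` in the role of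
`J⁻¹ L`. In the paper `b = 1/2`, `k = k₁`, `c = k₂ α λ / 2` and `a = α λ`, and the index type `m`
of the decoupled last block has one element. -/
def outputFeedbackMatrix {R : Type*} [Ring R] (K : Matrix n n R) (b k c a : R) :
    Matrix ((n ⊕ n) ⊕ (n ⊕ m)) ((n ⊕ n) ⊕ (n ⊕ m)) R :=
  fromBlocks
    (fromBlocks 0 (b • 1) (-(k • K)) 0)
    (fromBlocks 0 0 (-(c • K)) 0)
    (fromBlocks 0 (b • 1) 0 0)
    (fromBlocks (-(a • 1)) 0 0 (-(a • 1)))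

theorem outputFeedbackMatrix_map {R S : Type*} [Ring R] [Ring S] (f : R →+* S)
    (K : Matrix n n R) (b k c a : R) :
    (outputFeedbackMatrix m K b k c a).map f =
      outputFeedbackMatrix m (K.map f) (f b) (f k) (f c) (f a) := by
  simp [outputFeedbackMatrix, fromBlocks_map, Matrix.map_neg, Matrix.map_smul']

variable [Fintype n] [Fintype m]

theorem outputFeedbackMatrix_mulVec {R : Type*} [Ring R] (K : Matrix n n R) (b k c a : R)
    (x w z : n → R) (s : m → R) :
    outputFeedbackMatrix m K b k c a *ᵥ Sum.elim (Sum.elim x w) (Sum.elim z s) =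
      Sum.elim (Sum.elim (b • w) (-(k • K *ᵥ x) - c • K *ᵥ z))
        (Sum.elim (b • w - a • z) (-(a • s))) := by
  ext ((i | i) | (i | i)) <;>
    simp [outputFeedbackMatrix, fromBlocks_mulVec, neg_mulVec, smul_mulVec, sub_eq_add_neg]

section Elimination

variable {F : Type*} [Field F] {K : Matrix n n F} {b k c a μ : F}

theorem exists_mulVec_of_mem_spectrum_outputFeedbackMatrix (hb : b ≠ 0) (hμa : μ + a ≠ 0)
    (hμ : μ ∈ spectrum F (outputFeedbackMatrix m K b k c a)) :
    ∃ x ≠ 0, (b * (k * (μ + a) + c * μ)) • K *ᵥ x = -(μ ^ 2 * (μ + a)) • x := by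
  obtain ⟨v, hv, hAv⟩ := mem_spectrum_iff_exists_mulVec_eq_smul.mp hμ
  obtain ⟨x, w, z, s, rfl⟩ : ∃ x w z s, v = Sum.elim (Sum.elim x w) (Sum.elim z s) :=
    ⟨_, _, _, _, by ext ((i | i) | (i | i)) <;> rfl⟩
  obtain ⟨⟨hw, hx⟩, hz, hs⟩ :
      (b • w = μ • x ∧ -(k • K *ᵥ x) - c • K *ᵥ z = μ • w) ∧
        b • w - a • z = μ • z ∧ -(a • s) = μ • s := by
    simpa [outputFeedbackMatrix_mulVec, funext_iff] using hAv
  have hzx : (μ + a) • z = μ • x := by linear_combination (norm := module) hw - hz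
  refine ⟨x, ?_, ?_⟩
  · rintro rfl
    have hw0 : w = 0 := by simpa [hb] using hw
    have hz0 : z = 0 := by simpa [hμa] using hzx
    have hs0 : s = 0 := by
      have hsa : (μ + a) • s = 0 := by linear_combination (norm := module) -hs
      simpa [hμa] using hsa
    simp [hw0, hz0, hs0] at hv
  · have hKz : (μ + a) • K *ᵥ z = μ • K *ᵥ x := by
      rw [← mulVec_smul, hzx, mulVec_smul]
    linear_combination (norm := module)
      (-(b * (μ + a))) • hx - (b * c) • hKz - (μ * (μ + a)) • hw

theorem exists_mem_spectrum_of_mem_spectrum_outputFeedbackMatrix (hb : b ≠ 0) (hk : k ≠ 0)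
    (ha : a ≠ 0) (hμa : μ + a ≠ 0) (hμ : μ ∈ spectrum F (outputFeedbackMatrix m K b k c a)) :
    ∃ σ ∈ spectrum F K, μ ^ 3 + a * μ ^ 2 + b * (k + c) * σ * μ + a * b * k * σ = 0 := by
  obtain ⟨x, hx, hKx⟩ := exists_mulVec_of_mem_spectrum_outputFeedbackMatrix hb hμa hμ
  set g := b * (k * (μ + a) + c * μ) with hg
  have hg0 : g ≠ 0 := by
    intro h
    have hμ0 : μ = 0 := by simpa [h, hx, hμa] using hKx
    simp [hg, hμ0, hb, hk, ha] at h
  refine ⟨g⁻¹ * -(μ ^ 2 * (μ + a)), mem_spectrum_iff_exists_mulVec_eq_smul.mpr ⟨x, hx, ?_⟩, ?_⟩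
  · rw [mul_smul, ← hKx, inv_smul_smul₀ hg0]
  · linear_combination (-(μ ^ 2 * (μ + a))) * mul_inv_cancel₀ hg0

end Elimination

open scoped ComplexOrder in
theorem limit_output_feedback_matrix_hurwitz_general {K : Matrix n n ℝ}
    (hK : ∀ σ ∈ spectrum ℂ (K.map (algebraMap ℝ ℂ)), 0 < σ) {b k c a : ℝ} (hb : 0 < b)
    (hk : 0 < k) (hc : 0 < c) (ha : 0 < a) :
    ∀ μ ∈ spectrum ℂ ((outputFeedbackMatrix m K b k c a).map (algebraMap ℝ ℂ)), μ.re < 0 := by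
  intro μ hμ
  rw [outputFeedbackMatrix_map] at hμ
  by_cases hμa : μ + a = 0
  · simpa [eq_neg_of_add_eq_zero_left hμa] using ha
  obtain ⟨σ, hσK, hσ⟩ := exists_mem_spectrum_of_mem_spectrum_outputFeedbackMatrix
    (by simpa using hb.ne') (by simpa using hk.ne') (by simpa using ha.ne') hμa hμ
  obtain ⟨r, hr, rfl⟩ := RCLike.pos_iff_exists_ofReal.mp (hK σ hσK)
  have hrouth : a * b * k * r < b * (k + c) * r * a := by
    have : 0 < a * b * c * r := by positivity
    linarith
  refine re_neg_of_cubic_eq_zero (by positivity) ha hrouth ?_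
  simpa using hσ

end OutputFeedback

/-- Let `J` and `L` be real symmetric positive definite 3×3 matrices and
`k₁, k₂, α, λ > 0`. Then the 10×10 block matrix
`A = [[0, (1/2)I₃, 0, 0], [−k₁ J⁻¹L, 0, −(1/2)k₂αλ J⁻¹L, 0], [0, (1/2)I₃, −αλI₃, 0],
[0, 0, 0, −αλ]]` (first three diagonal blocks 3×3, last 1×1) is Hurwitz. -/
theorem limit_output_feedback_matrix_hurwitz
    (J L : Matrix (Fin 3) (Fin 3) ℝ) (hJ : J.PosDef) (hL : L.PosDef)
    (k₁ k₂ α lam : ℝ) (hk₁ : 0 < k₁) (hk₂ : 0 < k₂) (hα : 0 < α) (hlam : 0 < lam) :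
    ∀ μ ∈ spectrum ℂ
      ((Matrix.fromBlocks
        (Matrix.fromBlocks
          (0 : Matrix (Fin 3) (Fin 3) ℝ) ((1/2 : ℝ) • (1 : Matrix (Fin 3) (Fin 3) ℝ))
          (-(k₁ • (J⁻¹ * L))) (0 : Matrix (Fin 3) (Fin 3) ℝ))
        (Matrix.fromBlocks
          (0 : Matrix (Fin 3) (Fin 3) ℝ) (0 : Matrix (Fin 3) (Fin 1) ℝ)
          (-(((1/2) * k₂ * α * lam) • (J⁻¹ * L))) (0 : Matrix (Fin 3) (Fin 1) ℝ))
        (Matrix.fromBlocks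
          (0 : Matrix (Fin 3) (Fin 3) ℝ) ((1/2 : ℝ) • (1 : Matrix (Fin 3) (Fin 3) ℝ))
          (0 : Matrix (Fin 1) (Fin 3) ℝ) (0 : Matrix (Fin 1) (Fin 3) ℝ))
        (Matrix.fromBlocks
          (-((α * lam) • (1 : Matrix (Fin 3) (Fin 3) ℝ))) (0 : Matrix (Fin 3) (Fin 1) ℝ)
          (0 : Matrix (Fin 1) (Fin 3) ℝ) (-((α * lam) • (1 : Matrix (Fin 1) (Fin 1) ℝ))))).map
        (algebraMap ℝ ℂ)),
      μ.re < 0 :=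
  limit_output_feedback_matrix_hurwitz_general
    (fun _ hσ => pos_of_mem_spectrum_map_inv_mul hJ hL hσ)
    one_half_pos hk₁ (by positivity) (mul_pos hα hlam)
end

section
/- Let J and L be real symmetric positive definite 3×3 matrices and k₁ > 0, k₂ > 0. Let w₁, w₂ : ℝ → ℝ³ be differentiable functions satisfying w₁'(t) = (1/2) w₂(t) and J w₂'(t) = −L (k₁ w₁(t) + k₂ w₂(t)) for all t. Then the function V₁(t) = k₁ w₁(t)ᵀ L w₁(t) + (1/2) w₂(t)ᵀ J w₂(t) is differentiable with V₁'(t) = −k₂ w₂(t)ᵀ L w₂(t) for all t. -/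
open Matrix

/-!
For symmetric `M` the quadratic form `wᵀMw` has derivative `2 wᵀMw'`, so along a solution
`V₁' = k₁ w₁ᵀLw₂ + w₂ᵀJw₂'`. Substituting `Jw₂' = −L(k₁w₁ + k₂w₂)`, the cross terms
`k₁ w₁ᵀLw₂` and `−k₁ w₂ᵀLw₁` cancel by symmetry of `L`: the weight `k₁` in front of `w₁ᵀLw₁`
is chosen for exactly this. Only `−k₂ w₂ᵀLw₂` remains.
-/

theorem dotProduct_mulVec_comm_of_isSymm {n R : Type*} [Fintype n] [NonUnitalCommSemiring R]
    {M : Matrix n n R} (hM : M.IsSymm) (u v : n → R) :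
    u ⬝ᵥ (M *ᵥ v) = v ⬝ᵥ (M *ᵥ u) := by
  rw [← dotProduct_transpose_mulVec, hM.eq]

section Deriv

variable {𝕜 m n 𝔸 : Type*} [NontriviallyNormedField 𝕜] [Fintype n]

theorem hasDerivAt_dotProduct [NormedRing 𝔸] [NormedAlgebra 𝕜 𝔸]
    {u v : 𝕜 → n → 𝔸} {u' v' : n → 𝔸} {t : 𝕜}
    (hu : HasDerivAt u u' t) (hv : HasDerivAt v v' t) :
    HasDerivAt (fun s => u s ⬝ᵥ v s) (u' ⬝ᵥ v t + u t ⬝ᵥ v') t := by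
  simp only [dotProduct, ← Finset.sum_add_distrib]
  exact HasDerivAt.fun_sum fun i _ => (hasDerivAt_pi.1 hu i).mul (hasDerivAt_pi.1 hv i)

theorem hasDerivAt_const_mulVec [NormedRing 𝔸] [NormedAlgebra 𝕜 𝔸]
    (M : Matrix m n 𝔸) {v : 𝕜 → n → 𝔸} {v' : n → 𝔸} {t : 𝕜} (hv : HasDerivAt v v' t) :
    HasDerivAt (fun s => M *ᵥ v s) (M *ᵥ v') t :=
  hasDerivAt_pi.2 fun i =>
    HasDerivAt.fun_sum fun j _ => (hasDerivAt_pi.1 hv j).const_mul (M i j)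

theorem hasDerivAt_dotProduct_mulVec_self [NormedCommRing 𝔸] [NormedAlgebra 𝕜 𝔸]
    {M : Matrix n n 𝔸} (hM : M.IsSymm) {w : 𝕜 → n → 𝔸} {w' : n → 𝔸} {t : 𝕜}
    (hw : HasDerivAt w w' t) :
    HasDerivAt (fun s => w s ⬝ᵥ (M *ᵥ w s)) (2 * (w t ⬝ᵥ (M *ᵥ w'))) t := by
  refine (hasDerivAt_dotProduct hw (hasDerivAt_const_mulVec M hw)).congr_deriv ?_
  rw [dotProduct_mulVec_comm_of_isSymm hM w', two_mul]

theorem lyapunov_derivative_state_feedback_general [NeZero (2 : 𝕜)]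
    {J L : Matrix n n 𝕜} (hJ : J.IsSymm) (hL : L.IsSymm) (k₁ k₂ : 𝕜)
    {w₁ w₂ : 𝕜 → n → 𝕜} {w₂' : n → 𝕜} {t : 𝕜}
    (hw₁ : HasDerivAt w₁ ((1 / 2 : 𝕜) • w₂ t) t) (hw₂ : HasDerivAt w₂ w₂' t)
    (hw₂' : J *ᵥ w₂' = -(L *ᵥ (k₁ • w₁ t + k₂ • w₂ t))) :
    HasDerivAt
      (fun s => k₁ * (w₁ s ⬝ᵥ (L *ᵥ w₁ s)) + (1 / 2) * (w₂ s ⬝ᵥ (J *ᵥ w₂ s)))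
      (-(k₂ * (w₂ t ⬝ᵥ (L *ᵥ w₂ t)))) t := by
  have two_ne : (2 : 𝕜) ≠ 0 := two_ne_zero
  have hV := ((hasDerivAt_dotProduct_mulVec_self hL hw₁).const_mul k₁).add
    ((hasDerivAt_dotProduct_mulVec_self hJ hw₂).const_mul (1 / 2))
  have kinetic_rate : w₂ t ⬝ᵥ (J *ᵥ w₂') =
      -(k₁ * (w₂ t ⬝ᵥ (L *ᵥ w₁ t)) + k₂ * (w₂ t ⬝ᵥ (L *ᵥ w₂ t))) := by
    simp only [hw₂', mulVec_add, mulVec_smul, dotProduct_neg, dotProduct_add, dotProduct_smul,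
      smul_eq_mul]
  refine hV.congr_deriv ?_
  calc k₁ * (2 * (w₁ t ⬝ᵥ (L *ᵥ ((1 / 2 : 𝕜) • w₂ t)))) + 1 / 2 * (2 * (w₂ t ⬝ᵥ (J *ᵥ w₂')))
      = k₁ * (w₁ t ⬝ᵥ (L *ᵥ w₂ t)) + w₂ t ⬝ᵥ (J *ᵥ w₂') := by
        rw [mulVec_smul, dotProduct_smul, smul_eq_mul]
        field_simp
    _ = -(k₂ * (w₂ t ⬝ᵥ (L *ᵥ w₂ t))) := by
        rw [dotProduct_mulVec_comm_of_isSymm hL (w₁ t), kinetic_rate]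
        ring

end Deriv

/-- For the linear system `ẇ₁ = (1/2)w₂`, `J ẇ₂ = −L(k₁w₁ + k₂w₂)` with
`J, L` symmetric positive definite and `k₁, k₂ > 0`, the Lyapunov function
`V₁ = k₁ w₁ᵀLw₁ + (1/2) w₂ᵀJw₂` is differentiable along solutions with derivative
`V₁' = −k₂ w₂ᵀLw₂`. -/
theorem lyapunov_derivative_state_feedback
    (J L : Matrix (Fin 3) (Fin 3) ℝ) (hJ : J.PosDef) (hL : L.PosDef)
    (k₁ k₂ : ℝ) (hk₁ : 0 < k₁) (hk₂ : 0 < k₂)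
    (w₁ w₂ w₂' : ℝ → (Fin 3 → ℝ))
    (hw₁ : ∀ t, HasDerivAt w₁ ((1/2 : ℝ) • w₂ t) t)
    (hw₂ : ∀ t, HasDerivAt w₂ (w₂' t) t)
    (hw₂' : ∀ t, J *ᵥ w₂' t = -(L *ᵥ (k₁ • w₁ t + k₂ • w₂ t))) :
    ∀ t, HasDerivAt
      (fun t => k₁ * (w₁ t ⬝ᵥ (L *ᵥ w₁ t)) + (1/2) * (w₂ t ⬝ᵥ (J *ᵥ w₂ t)))
      (-(k₂ * (w₂ t ⬝ᵥ (L *ᵥ w₂ t)))) t := by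
  exact fun t => lyapunov_derivative_state_feedback_general
    (isHermitian_iff_isSymm.1 hJ.isHermitian) (isHermitian_iff_isSymm.1 hL.isHermitian) k₁ k₂
    (hw₁ t) (hw₂ t) (hw₂' t)
end

section
/- Let J and L be real symmetric positive definite 3×3 matrices and k₁ > 0, k₂ > 0. Then there exist constants c ≥ 1 and μ > 0 such that every solution (w₁, w₂) : [0, ∞) → ℝ³ × ℝ³ of the linear system ẇ₁ = (1/2) w₂, J ẇ₂ = −L (k₁ w₁ + k₂ w₂) satisfies ‖(w₁(t), w₂(t))‖ ≤ c e^{−μ t} ‖(w₁(0), w₂(0))‖ for all t ≥ 0. -/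
open Matrix

/-!
The energy `k₁ ⟪w₁, L w₁⟫ + ½ ⟪w₂, J w₂⟫` decreases along solutions, but only at the rate
`k₂ ⟪w₂, L w₂⟫`, which does not see `w₁`. Instead of invoking La Salle's principle, make the energy
a strict Lyapunov function: adding `ε (k₂ ⟪w₁, L w₁⟫ + ⟪w₁, J w₂⟫)`, in whose derivative the mixed
terms `k₂ ⟪w₁, L w₂⟫` cancel, contributes the missing dissipation `ε k₁ ⟪w₁, L w₁⟫` at the price of
`½ ε ⟪w₂, J w₂⟫`. For small `ε` both the modified energy and its dissipation are comparable to
`‖w₁‖² + ‖w₂‖²`, so Grönwall's inequality gives exponential decay.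
-/

theorem le_mul_exp_of_hasDerivWithinAt_le {f f' : ℝ → ℝ} {K a : ℝ}
    (hf : ∀ t ∈ Set.Ici a, HasDerivWithinAt f (f' t) (Set.Ici a) t)
    (hf' : ∀ t ∈ Set.Ici a, f' t ≤ K * f t) :
    ∀ t ∈ Set.Ici a, f t ≤ f a * Real.exp (K * (t - a)) := by
  intro t ht
  rw [← gronwallBound_ε0]
  refine le_gronwallBound_of_liminf_deriv_right_le (f' := f')
    (fun s hs => ((hf s hs.1).mono Set.Icc_subset_Ici_self).continuousWithinAt)
    (fun s hs _ hr => ((hf s hs.1).mono (Set.Ici_subset_Ici.2 hs.1)).liminf_right_slope_le hr)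
    le_rfl (fun s hs => ?_) t ⟨ht, le_rfl⟩
  simpa only [add_zero] using hf' s hs.1

theorem sqrt_le_of_lyapunov {N V V' : ℝ → ℝ} {a b d : ℝ} (ha : 0 < a) (hb : 0 < b) (hd : 0 ≤ d)
    (hV : ∀ t ∈ Set.Ici (0 : ℝ), HasDerivWithinAt V (V' t) (Set.Ici 0) t)
    (lower : ∀ t ∈ Set.Ici (0 : ℝ), a * N t ≤ V t)
    (upper : ∀ t ∈ Set.Ici (0 : ℝ), V t ≤ b * N t)
    (decay : ∀ t ∈ Set.Ici (0 : ℝ), V' t ≤ -(d * N t)) :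
    ∀ t ∈ Set.Ici (0 : ℝ),
      √(N t) ≤ √(b / a) * Real.exp (-(d / (2 * b)) * t) * √(N 0) := by
  intro t ht
  have rate : ∀ s ∈ Set.Ici (0 : ℝ), V' s ≤ -(d / b) * V s := fun s hs => by
    have : d / b * V s ≤ d / b * (b * N s) := by gcongr; exact upper s hs
    rw [← mul_assoc, div_mul_cancel₀ d hb.ne'] at this
    linarith [decay s hs]
  have exp_sq : Real.exp (-(d / b) * (t - 0)) = Real.exp (-(d / (2 * b)) * t) ^ 2 := by
    rw [← Real.exp_nat_mul]
    congr 1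
    push_cast
    field_simp
    ring
  have bound : N t ≤ b / a * Real.exp (-(d / (2 * b)) * t) ^ 2 * N 0 := by
    refine le_of_mul_le_mul_left ?_ ha
    calc a * N t ≤ V t := lower t ht
      _ ≤ V 0 * Real.exp (-(d / (2 * b)) * t) ^ 2 :=
        exp_sq ▸ le_mul_exp_of_hasDerivWithinAt_le hV rate t ht
      _ ≤ b * N 0 * Real.exp (-(d / (2 * b)) * t) ^ 2 := by
        gcongr; exact upper 0 Set.self_mem_Ici
      _ = a * (b / a * Real.exp (-(d / (2 * b)) * t) ^ 2 * N 0) := by field_simp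
  refine (Real.sqrt_le_sqrt bound).trans_eq ?_
  rw [Real.sqrt_mul (by positivity), Real.sqrt_mul (by positivity),
    Real.sqrt_sq (Real.exp_nonneg _)]

section Lyapunov

variable {E : Type*} [NormedAddCommGroup E] [NormedSpace ℝ E]

theorem abs_bilin_le_norm_mul_sq_add_sq (B : E →L[ℝ] E →L[ℝ] ℝ) (x y : E) :
    |B x y| ≤ ‖B‖ / 2 * (‖x‖ ^ 2 + ‖y‖ ^ 2) :=
  calc |B x y| ≤ ‖B‖ * ‖x‖ * ‖y‖ := B.le_opNorm₂ x y
    _ = ‖B‖ / 2 * (2 * ‖x‖ * ‖y‖) := by ring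
    _ ≤ ‖B‖ / 2 * (‖x‖ ^ 2 + ‖y‖ ^ 2) := by gcongr; exact two_mul_le_add_sq _ _

theorem min_mul_add_le {R : Type*} [Semiring R] [LinearOrder R] [IsOrderedRing R] {p q s t : R}
    (hs : 0 ≤ s) (ht : 0 ≤ t) :
    min p q * (s + t) ≤ p * s + q * t := by
  rw [mul_add]
  gcongr
  exacts [min_le_left p q, min_le_right p q]

/-- The energy `k₁ L(x, x) + ½ J(y, y)` of the state `(x, y)`, made a strict Lyapunov function by
the correction `ε (k₂ L(x, x) + J(x, y))`. The operators of the system are encoded by the bilinear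
forms `J` and `L`. -/
noncomputable def feedbackLyapunov (J L : E →L[ℝ] E →L[ℝ] ℝ) (k₁ k₂ ε : ℝ) (x y : E) : ℝ :=
  (k₁ + ε * k₂) * L x x + 1 / 2 * J y y + ε * J x y

/-- The rate at which `feedbackLyapunov` decreases along solutions in the state `(x, y)`. -/
noncomputable def feedbackDissipation (J L : E →L[ℝ] E →L[ℝ] ℝ) (k₁ k₂ ε : ℝ) (x y : E) : ℝ :=
  ε * k₁ * L x x + k₂ * L y y - ε / 2 * J y y

variable {J L : E →L[ℝ] E →L[ℝ] ℝ} {k₁ k₂ ε : ℝ}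

theorem hasDerivWithinAt_feedbackLyapunov (hJ : ∀ x y, J x y = J y x) (hL : ∀ x y, L x y = L y x)
    {w₁ w₂ : ℝ → E} {v : E} {s : Set ℝ} {t : ℝ}
    (hw₁ : HasDerivWithinAt w₁ ((1 / 2 : ℝ) • w₂ t) s t) (hw₂ : HasDerivWithinAt w₂ v s t)
    (hv : J v = -(L (k₁ • w₁ t + k₂ • w₂ t))) :
    HasDerivWithinAt (fun t => feedbackLyapunov J L k₁ k₂ ε (w₁ t) (w₂ t))
      (-feedbackDissipation J L k₁ k₂ ε (w₁ t) (w₂ t)) s t := by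
  have hJv (z : E) : J v z = -(k₁ * L (w₁ t) z + k₂ * L (w₂ t) z) := by
    simp [hv]
  have potential := L.hasDerivWithinAt_of_bilinear hw₁ hw₁
  have kinetic := J.hasDerivWithinAt_of_bilinear hw₂ hw₂
  have cross := J.hasDerivWithinAt_of_bilinear hw₁ hw₂
  refine (((potential.const_mul (k₁ + ε * k₂)).add (kinetic.const_mul (1 / 2))).add
    (cross.const_mul ε)).congr_deriv ?_
  rw [hJ (w₂ t) v, hJ (w₁ t) v, hJv, hJv, feedbackDissipation]
  simp only [map_smul, _root_.smul_apply, smul_eq_mul, hL (w₂ t) (w₁ t)]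
  ring

theorem le_feedbackLyapunov {l j : ℝ} (hL : ∀ x, l * ‖x‖ * ‖x‖ ≤ L x x)
    (hJ : ∀ y, j * ‖y‖ * ‖y‖ ≤ J y y) (hl : 0 ≤ l) (hk₁ : 0 ≤ k₁) (hk₂ : 0 ≤ k₂) (hε : 0 ≤ ε)
    (x y : E) :
    (k₁ * l - ‖J‖ * ε / 2) * ‖x‖ ^ 2 + (j / 2 - ‖J‖ * ε / 2) * ‖y‖ ^ 2
      ≤ feedbackLyapunov J L k₁ k₂ ε x y := by
  have hLx : k₁ * (l * ‖x‖ * ‖x‖) ≤ (k₁ + ε * k₂) * L x x := by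
    gcongr
    exacts [le_add_of_nonneg_right (by positivity), hL x]
  have hJxy := mul_le_mul_of_nonneg_left
    (neg_le_of_abs_le (abs_bilin_le_norm_mul_sq_add_sq J x y)) hε
  rw [feedbackLyapunov]
  linarith [hJ y]

theorem feedbackLyapunov_le (hk₁ : 0 ≤ k₁) (hk₂ : 0 ≤ k₂) (hε : 0 ≤ ε) (x y : E) :
    feedbackLyapunov J L k₁ k₂ ε x y
      ≤ ((k₁ + ε * k₂) * ‖L‖ + (1 + ε) / 2 * ‖J‖) * (‖x‖ ^ 2 + ‖y‖ ^ 2) := by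
  have hLx : (k₁ + ε * k₂) * L x x ≤ (k₁ + ε * k₂) * (‖L‖ * (‖x‖ ^ 2 + ‖y‖ ^ 2)) := by
    gcongr
    have := le_of_abs_le (abs_bilin_le_norm_mul_sq_add_sq L x x)
    have : 0 ≤ ‖L‖ * ‖y‖ ^ 2 := by positivity
    linarith
  have hJy : J y y ≤ ‖J‖ * (‖x‖ ^ 2 + ‖y‖ ^ 2) := by
    have := le_of_abs_le (abs_bilin_le_norm_mul_sq_add_sq J y y)
    have : 0 ≤ ‖J‖ * ‖x‖ ^ 2 := by positivity
    linarith
  have hJxy := mul_le_mul_of_nonneg_left (le_of_abs_le (abs_bilin_le_norm_mul_sq_add_sq J x y)) hε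
  rw [feedbackLyapunov]
  linarith

theorem le_feedbackDissipation {l : ℝ} (hL : ∀ x, l * ‖x‖ * ‖x‖ ≤ L x x)
    (hk₁ : 0 ≤ k₁) (hk₂ : 0 ≤ k₂) (hε : 0 ≤ ε) (x y : E) :
    ε * k₁ * l * ‖x‖ ^ 2 + (k₂ * l - ‖J‖ * ε / 2) * ‖y‖ ^ 2
      ≤ feedbackDissipation J L k₁ k₂ ε x y := by
  have hLx := mul_le_mul_of_nonneg_left (hL x) (mul_nonneg hε hk₁)
  have hLy := mul_le_mul_of_nonneg_left (hL y) hk₂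
  have hJy := mul_le_mul_of_nonneg_left (le_of_abs_le (abs_bilin_le_norm_mul_sq_add_sq J y y)) hε
  rw [feedbackDissipation]
  linarith

theorem exists_feedbackLyapunov_bounds (hJ : IsCoercive J) (hL : IsCoercive L)
    (hk₁ : 0 < k₁) (hk₂ : 0 < k₂) :
    ∃ ε a b d : ℝ, 0 < a ∧ a ≤ b ∧ 0 < d ∧ ∀ x y : E,
      a * (‖x‖ ^ 2 + ‖y‖ ^ 2) ≤ feedbackLyapunov J L k₁ k₂ ε x y ∧
      feedbackLyapunov J L k₁ k₂ ε x y ≤ b * (‖x‖ ^ 2 + ‖y‖ ^ 2) ∧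
      d * (‖x‖ ^ 2 + ‖y‖ ^ 2) ≤ feedbackDissipation J L k₁ k₂ ε x y := by
  obtain ⟨j, hj, hJ⟩ := hJ
  obtain ⟨l, hl, hL⟩ := hL
  obtain ⟨ε, hε, small⟩ := exists_pos_mul_lt
    (show 0 < min j (min (2 * (k₁ * l)) (2 * (k₂ * l))) by positivity) ‖J‖
  obtain ⟨small_j, small_k₁, small_k₂⟩ : ‖J‖ * ε < j ∧ ‖J‖ * ε < 2 * (k₁ * l) ∧
      ‖J‖ * ε < 2 * (k₂ * l) := by
    simpa only [lt_min_iff] using small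
  set a := min (k₁ * l - ‖J‖ * ε / 2) (j / 2 - ‖J‖ * ε / 2)
  set b := (k₁ + ε * k₂) * ‖L‖ + (1 + ε) / 2 * ‖J‖
  refine ⟨ε, a, max a b, min (ε * k₁ * l) (k₂ * l - ‖J‖ * ε / 2),
    lt_min (by linarith) (by linarith), le_max_left a b, lt_min (by positivity) (by linarith),
    fun x y => ⟨?_, ?_, ?_⟩⟩
  · exact (min_mul_add_le (sq_nonneg _) (sq_nonneg _)).trans
      (le_feedbackLyapunov hL hJ hl.le hk₁.le hk₂.le hε.le x y)
  · refine (feedbackLyapunov_le hk₁.le hk₂.le hε.le x y).trans ?_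
    gcongr
    exact le_max_right a b
  · exact (min_mul_add_le (sq_nonneg _) (sq_nonneg _)).trans
      (le_feedbackDissipation hL hk₁.le hk₂.le hε.le x y)

theorem limit_state_feedback_system_exponentially_stable_general
    (hJs : ∀ x y, J x y = J y x) (hLs : ∀ x y, L x y = L y x)
    (hJ : IsCoercive J) (hL : IsCoercive L) (hk₁ : 0 < k₁) (hk₂ : 0 < k₂) :
    ∃ c μ : ℝ, 1 ≤ c ∧ 0 < μ ∧
      ∀ w₁ w₂ w₂' : ℝ → E,
        (∀ t ∈ Set.Ici (0 : ℝ), HasDerivWithinAt w₁ ((1 / 2 : ℝ) • w₂ t) (Set.Ici 0) t) →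
        (∀ t ∈ Set.Ici (0 : ℝ), HasDerivWithinAt w₂ (w₂' t) (Set.Ici 0) t) →
        (∀ t ∈ Set.Ici (0 : ℝ), J (w₂' t) = -(L (k₁ • w₁ t + k₂ • w₂ t))) →
        ∀ t ∈ Set.Ici (0 : ℝ),
          √(‖w₁ t‖ ^ 2 + ‖w₂ t‖ ^ 2)
            ≤ c * Real.exp (-μ * t) * √(‖w₁ 0‖ ^ 2 + ‖w₂ 0‖ ^ 2) := by
  obtain ⟨ε, a, b, d, ha, hab, hd, bounds⟩ := exists_feedbackLyapunov_bounds hJ hL hk₁ hk₂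
  have hb : 0 < b := ha.trans_le hab
  refine ⟨√(b / a), d / (2 * b), Real.one_le_sqrt.2 ((one_le_div ha).2 hab), by positivity,
    fun w₁ w₂ w₂' hw₁ hw₂ hw₂' => ?_⟩
  exact sqrt_le_of_lyapunov (N := fun t => ‖w₁ t‖ ^ 2 + ‖w₂ t‖ ^ 2) ha hb hd.le
    (fun t ht => hasDerivWithinAt_feedbackLyapunov hJs hLs (hw₁ t ht) (hw₂ t ht) (hw₂' t ht))
    (fun t _ => (bounds (w₁ t) (w₂ t)).1) (fun t _ => (bounds (w₁ t) (w₂ t)).2.1)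
    (fun t _ => neg_le_neg (bounds (w₁ t) (w₂ t)).2.2)

end Lyapunov

section FiniteDimensional

theorem isCoercive_of_forall_pos {E : Type*} [NormedAddCommGroup E] [NormedSpace ℝ E]
    [FiniteDimensional ℝ E] {B : E →L[ℝ] E →L[ℝ] ℝ} (hB : ∀ x, x ≠ 0 → 0 < B x x) :
    IsCoercive B := by
  cases subsingleton_or_nontrivial E
  · exact ⟨1, one_pos, fun x => by simp [Subsingleton.elim x 0]⟩
  have : ProperSpace E := FiniteDimensional.proper ℝ E
  obtain ⟨u, hu, hmin⟩ := (isCompact_sphere (0 : E) 1).exists_isMinOn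
    (NormedSpace.sphere_nonempty.2 zero_le_one) (f := fun x => B x x) (by fun_prop)
  refine ⟨B u u, hB u (ne_zero_of_mem_unit_sphere ⟨u, hu⟩), fun x => ?_⟩
  rcases eq_or_ne x 0 with rfl | hx
  · simp
  have hx' : 0 < ‖x‖ := norm_pos_iff.2 hx
  have normalized : B u u ≤ ‖x‖⁻¹ * (‖x‖⁻¹ * B x x) := by
    simpa using hmin (show ‖x‖⁻¹ • x ∈ Metric.sphere (0 : E) 1 by simp [norm_smul, hx'.ne'])
  calc B u u * ‖x‖ * ‖x‖ ≤ ‖x‖⁻¹ * (‖x‖⁻¹ * B x x) * ‖x‖ * ‖x‖ := by gcongr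
    _ = B x x := by field_simp

variable {n : Type*} [Fintype n] [DecidableEq n]

/-- The bilinear form `(x, y) ↦ ⟪A x, y⟫` of a real matrix `A` on Euclidean space. The matrix acts
on the first argument, so that an equation between vectors `A x` is one between functionals
`euclideanForm A x`. -/
noncomputable def euclideanForm (A : Matrix n n ℝ) :
    EuclideanSpace ℝ n →L[ℝ] EuclideanSpace ℝ n →L[ℝ] ℝ :=
  (innerₗ (EuclideanSpace ℝ n) ∘ₗ A.toEuclideanLin).toContinuousBilinearMap

theorem euclideanForm_apply (A : Matrix n n ℝ) (x y : EuclideanSpace ℝ n) :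
    euclideanForm A x y = inner ℝ (A.toEuclideanLin x) y :=
  rfl

theorem euclideanForm_comm {A : Matrix n n ℝ} (hA : A.IsHermitian) (x y : EuclideanSpace ℝ n) :
    euclideanForm A x y = euclideanForm A y x := by
  rw [euclideanForm_apply, euclideanForm_apply, isSymmetric_toEuclideanLin_iff.2 hA x y,
    real_inner_comm]

theorem isCoercive_euclideanForm {A : Matrix n n ℝ} (hA : A.PosDef) :
    IsCoercive (euclideanForm A) := by
  refine isCoercive_of_forall_pos fun x hx => ?_
  have := hA.dotProduct_mulVec_pos (x := x.ofLp) (by simpa using hx)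
  simpa [euclideanForm_apply, EuclideanSpace.inner_eq_star_dotProduct] using this

theorem euclideanForm_eq_neg {J L : Matrix n n ℝ} {x y : EuclideanSpace ℝ n}
    (h : J *ᵥ x = -(L *ᵥ y)) : euclideanForm J x = -euclideanForm L y := by
  ext z
  simp [euclideanForm_apply, toLpLin_apply, h]

end FiniteDimensional

/-- With `J, L` symmetric positive definite and `k₁, k₂ > 0`, there exist
`c ≥ 1` and `μ > 0` such that every solution `(w₁, w₂)` on `[0, ∞)` of
`ẇ₁ = (1/2)w₂`, `J ẇ₂ = −L(k₁w₁ + k₂w₂)` satisfies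
`‖(w₁(t), w₂(t))‖ ≤ c e^{−μt} ‖(w₁(0), w₂(0))‖` for all `t ≥ 0`, where `‖·‖` is the
Euclidean norm on `ℝ³ × ℝ³ ≅ ℝ⁶`. -/
theorem limit_state_feedback_system_exponentially_stable
    (J L : Matrix (Fin 3) (Fin 3) ℝ) (hJ : J.PosDef) (hL : L.PosDef)
    (k₁ k₂ : ℝ) (hk₁ : 0 < k₁) (hk₂ : 0 < k₂) :
    ∃ c μ : ℝ, 1 ≤ c ∧ 0 < μ ∧
      ∀ w₁ w₂ w₂' : ℝ → EuclideanSpace ℝ (Fin 3),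
        (∀ t ∈ Set.Ici (0 : ℝ), HasDerivWithinAt w₁ ((1/2 : ℝ) • w₂ t) (Set.Ici 0) t) →
        (∀ t ∈ Set.Ici (0 : ℝ), HasDerivWithinAt w₂ (w₂' t) (Set.Ici 0) t) →
        (∀ t ∈ Set.Ici (0 : ℝ), J *ᵥ w₂' t = -(L *ᵥ (k₁ • w₁ t + k₂ • w₂ t))) →
        ∀ t ∈ Set.Ici (0 : ℝ),
          Real.sqrt (‖w₁ t‖ ^ 2 + ‖w₂ t‖ ^ 2)
            ≤ c * Real.exp (-μ * t) * Real.sqrt (‖w₁ 0‖ ^ 2 + ‖w₂ 0‖ ^ 2) := by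
  obtain ⟨c, μ, hc, hμ, decay⟩ := limit_state_feedback_system_exponentially_stable_general
    (euclideanForm_comm hJ.isHermitian) (euclideanForm_comm hL.isHermitian)
    (isCoercive_euclideanForm hJ) (isCoercive_euclideanForm hL) hk₁ hk₂
  exact ⟨c, μ, hc, hμ, fun w₁ w₂ w₂' hw₁ hw₂ hw₂' =>
    decay w₁ w₂ w₂' hw₁ hw₂ fun t ht => euclideanForm_eq_neg (hw₂' t ht)⟩
end

section
/- Let A be a real n×n matrix, P a real symmetric n×n matrix satisfying P A + Aᵀ P = −Iₙ, and let T > 0, ε > 0. Then for every z ∈ ℝⁿ, (z + εT A z)ᵀ P (z + εT A z) − zᵀ P z ≤ εT (−1 + εT ‖Aᵀ P A‖) ‖z‖². In particular, if ε ≤ 1 / (2 T ‖Aᵀ P A‖), then (z + εT A z)ᵀ P (z + εT A z) − zᵀ P z ≤ −(1/2) εT ‖z‖² for all z ∈ ℝⁿ. -/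
open Matrix

/-!
Along one step `z ↦ z + h A z`, the quadratic form `V z = ⟪z, P z⟫` changes by exactly
`h ⟪z, (P A + A† P) z⟫ + h² ⟪z, A† P A z⟫`. The Lyapunov equation turns the first-order term into
`-h ‖z‖²`, while the second-order term is at most `h² ‖A† P A‖ ‖z‖²` by Cauchy–Schwarz. The step
restriction `h ‖A† P A‖ ≤ 1 / 2` lets the first-order term absorb half of itself.
-/

section QuadraticForm

open scoped InnerProductSpace

variable {E : Type*} [SeminormedAddCommGroup E] [InnerProductSpace ℝ E]

theorem inner_add_smul_map_add_smul (P : E →ₗ[ℝ] E) (x v : E) (h : ℝ) :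
    ⟪x + h • v, P (x + h • v)⟫_ℝ =
      ⟪x, P x⟫_ℝ + h * (⟪x, P v⟫_ℝ + ⟪v, P x⟫_ℝ) + h ^ 2 * ⟪v, P v⟫_ℝ := by
  simp only [map_add, map_smul, inner_add_left, inner_add_right, real_inner_smul_left,
    real_inner_smul_right]
  ring

theorem real_inner_map_self_le_opNorm_mul_norm_sq (M : E →L[ℝ] E) (x : E) :
    ⟪x, M x⟫_ℝ ≤ ‖M‖ * ‖x‖ ^ 2 :=
  calc
    ⟪x, M x⟫_ℝ ≤ ‖x‖ * ‖M x‖ := real_inner_le_norm x (M x)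
    _ ≤ ‖x‖ * (‖M‖ * ‖x‖) := by gcongr; exact M.le_opNorm x
    _ = ‖M‖ * ‖x‖ ^ 2 := by ring

end QuadraticForm

section HilbertSpace

open ContinuousLinearMap (adjoint adjoint_inner_right)
open scoped InnerProductSpace

variable {E : Type*} [NormedAddCommGroup E] [InnerProductSpace ℝ E] [CompleteSpace E]

theorem inner_euler_step_sub_inner (A P : E →L[ℝ] E) (h : ℝ) (z : E) :
    ⟪z + h • A z, P (z + h • A z)⟫_ℝ - ⟪z, P z⟫_ℝ =
      h * ⟪z, (P * A + adjoint A * P) z⟫_ℝ + h ^ 2 * ⟪z, (adjoint A * P * A) z⟫_ℝ := by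
  have expansion : ⟪z + h • A z, P (z + h • A z)⟫_ℝ =
      ⟪z, P z⟫_ℝ + h * (⟪z, P (A z)⟫_ℝ + ⟪A z, P z⟫_ℝ) + h ^ 2 * ⟪A z, P (A z)⟫_ℝ :=
    inner_add_smul_map_add_smul (P : E →ₗ[ℝ] E) z (A z) h
  simp only [_root_.add_apply, mul_apply_eq_comp, inner_add_right, adjoint_inner_right]
  rw [expansion]
  ring

theorem inner_euler_step_sub_inner_le_of_lyapunov {A P : E →L[ℝ] E}
    (hLyap : P * A + adjoint A * P = -1) (h : ℝ) (z : E) :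
    ⟪z + h • A z, P (z + h • A z)⟫_ℝ - ⟪z, P z⟫_ℝ ≤
      h * (-1 + h * ‖adjoint A * P * A‖) * ‖z‖ ^ 2 :=
  calc
    ⟪z + h • A z, P (z + h • A z)⟫_ℝ - ⟪z, P z⟫_ℝ
        = -(h * ‖z‖ ^ 2) + h ^ 2 * ⟪z, (adjoint A * P * A) z⟫_ℝ := by
      rw [inner_euler_step_sub_inner, hLyap, _root_.neg_apply, one_apply_eq_self,
        inner_neg_right, real_inner_self_eq_norm_sq, mul_neg]
    _ ≤ -(h * ‖z‖ ^ 2) + h ^ 2 * (‖adjoint A * P * A‖ * ‖z‖ ^ 2) := by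
      gcongr
      exact real_inner_map_self_le_opNorm_mul_norm_sq _ z
    _ = h * (-1 + h * ‖adjoint A * P * A‖) * ‖z‖ ^ 2 := by ring

theorem inner_euler_step_sub_inner_le_neg_half_of_lyapunov {A P : E →L[ℝ] E}
    (hLyap : P * A + adjoint A * P = -1) {h : ℝ} (hh : 0 ≤ h)
    (hstep : h * ‖adjoint A * P * A‖ ≤ 1 / 2) (z : E) :
    ⟪z + h • A z, P (z + h • A z)⟫_ℝ - ⟪z, P z⟫_ℝ ≤ -(1 / 2) * h * ‖z‖ ^ 2 :=
  calc
    ⟪z + h • A z, P (z + h • A z)⟫_ℝ - ⟪z, P z⟫_ℝ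
        ≤ h * (-1 + h * ‖adjoint A * P * A‖) * ‖z‖ ^ 2 :=
      inner_euler_step_sub_inner_le_of_lyapunov hLyap h z
    _ ≤ h * (-1 + 1 / 2) * ‖z‖ ^ 2 := by gcongr
    _ = -(1 / 2) * h * ‖z‖ ^ 2 := by ring

theorem lyapunov_one_step_decrement_general (A P : E →L[ℝ] E)
    (hLyap : P * A + adjoint A * P = -1) (T ε : ℝ) (hT : 0 ≤ T) (hε : 0 ≤ ε) :
    (∀ z : E, ⟪z + (ε * T) • A z, P (z + (ε * T) • A z)⟫_ℝ - ⟪z, P z⟫_ℝ ≤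
      ε * T * (-1 + ε * T * ‖adjoint A * P * A‖) * ‖z‖ ^ 2) ∧
    (ε ≤ 1 / (2 * T * ‖adjoint A * P * A‖) → ∀ z : E,
      ⟪z + (ε * T) • A z, P (z + (ε * T) • A z)⟫_ℝ - ⟪z, P z⟫_ℝ ≤
        -(1 / 2) * ε * T * ‖z‖ ^ 2) := by
  refine ⟨inner_euler_step_sub_inner_le_of_lyapunov hLyap (ε * T), fun hle z ↦ ?_⟩
  have hstep : ε * T * ‖adjoint A * P * A‖ ≤ 1 / 2 := by
    -- A zero denominator is included: there `1 / 0 = 0`, so `hle` reads `ε ≤ 0`.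
    have := mul_le_of_le_div₀ zero_le_one (by positivity) hle
    linarith
  simpa only [mul_assoc] using
    inner_euler_step_sub_inner_le_neg_half_of_lyapunov hLyap (mul_nonneg hε hT) hstep z

end HilbertSpace

theorem toEuclideanCLM_conjTranspose {𝕜 m : Type*} [RCLike 𝕜] [Fintype m] [DecidableEq m]
    (A : Matrix m m 𝕜) :
    toEuclideanCLM (𝕜 := 𝕜) Aᴴ = ContinuousLinearMap.adjoint (toEuclideanCLM (𝕜 := 𝕜) A) :=
  map_star toEuclideanCLM A

theorem toEuclideanCLM_transpose {m : Type*} [Fintype m] [DecidableEq m] (A : Matrix m m ℝ) :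
    toEuclideanCLM (𝕜 := ℝ) Aᵀ = ContinuousLinearMap.adjoint (toEuclideanCLM (𝕜 := ℝ) A) := by
  rw [← conjTranspose_eq_transpose_of_trivial, toEuclideanCLM_conjTranspose]

/-- Let `P` be real symmetric with `PA + AᵀP = −Iₙ`, and `T, ε > 0`. Then
for every `z ∈ ℝⁿ`,
`(z + εTAz)ᵀP(z + εTAz) − zᵀPz ≤ εT(−1 + εT‖AᵀPA‖)‖z‖²`, and if moreover
`ε ≤ 1/(2T‖AᵀPA‖)` then the left-hand side is at most `−(1/2)εT‖z‖²`. Here `‖z‖` is the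
Euclidean norm and `‖M‖` the spectral norm (Euclidean operator 2-norm). -/
theorem lyapunov_one_step_decrement {n : ℕ}
    (A P : Matrix (Fin n) (Fin n) ℝ) (hP : P.IsHermitian)
    (hLyap : P * A + Aᵀ * P = -1)
    (T ε : ℝ) (hT : 0 < T) (hε : 0 < ε) :
    (∀ z : EuclideanSpace ℝ (Fin n),
      (inner ℝ (z + (ε * T) • (Matrix.toEuclideanCLM (𝕜 := ℝ) A z))
          (Matrix.toEuclideanCLM (𝕜 := ℝ) P
            (z + (ε * T) • (Matrix.toEuclideanCLM (𝕜 := ℝ) A z))) : ℝ)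
        - (inner ℝ z (Matrix.toEuclideanCLM (𝕜 := ℝ) P z) : ℝ)
      ≤ ε * T * (-1 + ε * T * ‖Matrix.toEuclideanCLM (𝕜 := ℝ) (Aᵀ * P * A)‖) * ‖z‖ ^ 2)
    ∧ (ε ≤ 1 / (2 * T * ‖Matrix.toEuclideanCLM (𝕜 := ℝ) (Aᵀ * P * A)‖) →
      ∀ z : EuclideanSpace ℝ (Fin n),
        (inner ℝ (z + (ε * T) • (Matrix.toEuclideanCLM (𝕜 := ℝ) A z))
            (Matrix.toEuclideanCLM (𝕜 := ℝ) P
              (z + (ε * T) • (Matrix.toEuclideanCLM (𝕜 := ℝ) A z))) : ℝ)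
          - (inner ℝ z (Matrix.toEuclideanCLM (𝕜 := ℝ) P z) : ℝ)
        ≤ -(1/2) * ε * T * ‖z‖ ^ 2) := by
  simpa only [map_mul, toEuclideanCLM_transpose] using
    lyapunov_one_step_decrement_general (toEuclideanCLM (𝕜 := ℝ) A) (toEuclideanCLM (𝕜 := ℝ) P)
      (by simpa [toEuclideanCLM_transpose] using congrArg (toEuclideanCLM (𝕜 := ℝ)) hLyap)
      T ε hT.le hε.le
end

section
/- Let J and L₀ be real symmetric positive definite 3×3 matrices, k₁ > 0, k₂ > 0, and let L : ℝ → M₃(ℝ) be a matrix-valued function continuous at 0 with L(0) = L₀. For T > 0 define the 6×6 block matrix A_s(T) = [[0, (1/2)I₃], [−k₁ J⁻¹ L(T), −k₂ J⁻¹ L(T)]]. Then there exists T* > 0 such that for every 0 < T < T* there exists ε₀ > 0 such that for all 0 < ε ≤ ε₀, every complex eigenvalue of I₆ + εT A_s(T) has modulus strictly less than 1; consequently the discrete-time system z(k+1) = (I₆ + εT A_s(T)) z(k) is exponentially stable. -/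
open Matrix

/-!
Read `A_s(0)` as the system `J z₂' = -L₀ (k₁ z₁ + k₂ z₂)`, `z₁' = z₂ / 2`. The energy
`(k₁/2) z₁ᵀ L₀ z₁ + (1/4) z₂ᵀ J z₂` decreases along it, but only through `z₂`; adding the cross term
`δ z₁ᵀ J z₂` together with the compensating `δ k₂ z₁ᵀ L₀ z₁`, for a small `δ > 0`, makes the
decrease strict in `z₁` as well. This gives a Lyapunov matrix `P` for the limit system. Positive
definiteness is an open condition, so the same `P` serves for `A_s(T)` with `T` small, and, since
`P - (1 + hA)ᵀ P (1 + hA) = h (-(Aᵀ P + P A) - h Aᵀ P A)`, also for the Euler step of length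
`h = εT` with `h` small, uniformly in `T`. The resulting Stein inequality puts the spectrum inside
the open unit disc, and Gelfand's formula turns this into exponential decay of the powers.
-/

open Filter Topology

section PositiveDefinite

open scoped ComplexOrder

variable {n 𝕜 : Type*} [RCLike 𝕜]

theorem eventually_posDef_of_tendsto [Finite n] {ι : Type*} {l : Filter ι}
    {Q : ι → Matrix n n 𝕜} {Q₀ : Matrix n n 𝕜} (hQ : Tendsto Q l (𝓝 Q₀))
    (hherm : ∀ᶠ i in l, (Q i).IsHermitian) (hQ₀ : Q₀.PosDef) : ∀ᶠ i in l, (Q i).PosDef := by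
  have := Fintype.ofFinite n
  have hsphere : ∀ᶠ R in 𝓝 Q₀, ∀ y ∈ Metric.sphere (0 : n → 𝕜) 1,
      0 < RCLike.re (star y ⬝ᵥ R *ᵥ y) := by
    refine (isCompact_sphere _ _).eventually_forall_of_forall_eventually fun y hy ↦ ?_
    have hcont : Continuous fun z : Matrix n n 𝕜 × (n → 𝕜) ↦
        RCLike.re (star z.2 ⬝ᵥ z.1 *ᵥ z.2) := by fun_prop
    have hy₀ : y ≠ 0 := ne_zero_of_mem_unit_sphere ⟨y, hy⟩
    exact hcont.continuousAt.eventually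
      (lt_mem_nhds (RCLike.pos_iff.1 (hQ₀.dotProduct_mulVec_pos hy₀)).1)
  filter_upwards [hQ.eventually hsphere, hherm] with i hi hherm_i
  refine .of_dotProduct_mulVec_pos hherm_i fun x hx ↦
    RCLike.pos_iff.2 ⟨?_, hherm_i.im_star_dotProduct_mulVec_self x⟩
  have hnorm : 0 < ‖x‖⁻¹ := inv_pos.2 (norm_pos_iff.2 hx)
  have hunit := hi ((‖x‖⁻¹ : ℝ) • x) (by simp [norm_smul, hx])
  rw [star_smul, mulVec_smul, dotProduct_smul, smul_dotProduct, RCLike.smul_re, RCLike.smul_re,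
    star_trivial] at hunit
  exact pos_of_mul_pos_right (pos_of_mul_pos_right hunit hnorm.le) hnorm.le

theorem posDef_fromBlocks_of_schur₂₂ {m : Type*} [Finite m] [Fintype n] [DecidableEq n]
    {A : Matrix m m 𝕜} {B : Matrix m n 𝕜} {D : Matrix n n 𝕜} (hD : D.PosDef)
    (hS : (A - B * D⁻¹ * Bᴴ).PosDef) : (fromBlocks A B Bᴴ D).PosDef := by
  classical
  have := Fintype.ofFinite m
  have : Invertible D := hD.isUnit.invertible
  refine ((hD.fromBlocks₂₂ A B).2 hS.posSemidef).posDef_iff_det_ne_zero.2 ?_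
  rw [det_fromBlocks₂₂, invOf_eq_nonsing_inv]
  exact mul_ne_zero hD.det_pos.ne' hS.det_pos.ne'

theorem posDef_map_algebraMap_s10 [Finite n] {P : Matrix n n ℝ} (hP : P.PosDef) :
    (P.map (algebraMap ℝ 𝕜)).PosDef := by
  classical
  have := Fintype.ofFinite n
  open scoped MatrixOrder in
  obtain ⟨B, rfl⟩ := CStarAlgebra.nonneg_iff_eq_star_mul_self.1 hP.posSemidef.nonneg
  have hB : IsUnit B := isUnit_of_mul_isUnit_right hP.isUnit
  have hmap : (star B * B).map (algebraMap ℝ 𝕜)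
      = (B.map (algebraMap ℝ 𝕜))ᴴ * B.map (algebraMap ℝ 𝕜) := by
    rw [Matrix.map_mul, star_eq_conjTranspose, conjTranspose_map _ fun x ↦ by simp]
  rw [hmap]
  exact .conjTranspose_mul_self _
    (mulVec_injective_of_isUnit (hB.map (algebraMap ℝ 𝕜).mapMatrix))

end PositiveDefinite

section Stein

open scoped ComplexOrder

variable {n 𝕜 : Type*} [Fintype n] [DecidableEq n] [RCLike 𝕜]

theorem stein_one_add_smul (P A : Matrix n n 𝕜) (h : ℝ) :
    P - (1 + h • A)ᴴ * P * (1 + h • A) = h • (-(Aᴴ * P + P * A) - h • (Aᴴ * P * A)) := by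
  simp only [conjTranspose_add, conjTranspose_one, conjTranspose_smul, star_trivial,
    Matrix.add_mul, Matrix.mul_add, Matrix.one_mul, Matrix.mul_one, Matrix.smul_mul,
    Matrix.mul_smul]
  module

theorem eventually_posDef_stein_one_add_smul {ι : Type*} {l : Filter ι} {A : ι → Matrix n n 𝕜}
    {A₀ P : Matrix n n 𝕜} (hA : Tendsto A l (𝓝 A₀)) (hP : P.IsHermitian)
    (hlyap : (-(A₀ᴴ * P + P * A₀)).PosDef) :
    ∀ᶠ p : ι × ℝ in l ×ˢ 𝓝[>] 0, (P - (1 + p.2 • A p.1)ᴴ * P * (1 + p.2 • A p.1)).PosDef := by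
  have hherm (B : Matrix n n 𝕜) (h : ℝ) :
      (-(Bᴴ * P + P * B) - h • (Bᴴ * P * B)).IsHermitian := by
    simp [IsHermitian, hP.eq, Matrix.mul_assoc, add_comm]
  have hlim : Tendsto (fun p : ι × ℝ ↦
      -((A p.1)ᴴ * P + P * A p.1) - p.2 • ((A p.1)ᴴ * P * A p.1)) (l ×ˢ 𝓝[>] 0)
      (𝓝 (-(A₀ᴴ * P + P * A₀))) := by
    have hcont : Continuous fun q : Matrix n n 𝕜 × ℝ ↦
        -(q.1ᴴ * P + P * q.1) - q.2 • (q.1ᴴ * P * q.1) := by fun_prop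
    simpa [Function.comp_def] using (hcont.tendsto (A₀, 0)).comp
      ((hA.comp tendsto_fst).prodMk_nhds (tendsto_nhds_of_tendsto_nhdsWithin tendsto_snd))
  filter_upwards [eventually_posDef_of_tendsto hlim (.of_forall fun p ↦ hherm _ _) hlyap,
    tendsto_snd.eventually self_mem_nhdsWithin] with p hp hpos
  rw [stein_one_add_smul]
  exact hp.smul hpos

theorem norm_lt_one_of_mem_spectrum_of_stein {P M : Matrix n n 𝕜} (hP : P.PosDef)
    (hstein : (P - Mᴴ * P * M).PosDef) {μ : 𝕜} (hμ : μ ∈ spectrum 𝕜 M) : ‖μ‖ < 1 := by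
  rw [← spectrum_toLin', ← Module.End.hasEigenvalue_iff_mem_spectrum] at hμ
  obtain ⟨v, hv⟩ := hμ.exists_hasEigenvector
  have hMv : M *ᵥ v = μ • v := hv.apply_eq_smul
  have hvalue : star v ⬝ᵥ (P - Mᴴ * P * M) *ᵥ v
      = ((1 - ‖μ‖ ^ 2 : ℝ) : 𝕜) * (star v ⬝ᵥ P *ᵥ v) := by
    have hquad : star v ⬝ᵥ (Mᴴ * P * M) *ᵥ v = star (M *ᵥ v) ⬝ᵥ P *ᵥ (M *ᵥ v) := by
      rw [← mulVec_mulVec, ← mulVec_mulVec, dotProduct_mulVec, ← star_mulVec]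
    rw [sub_mulVec, dotProduct_sub, hquad, hMv, star_smul, smul_dotProduct, mulVec_smul,
      dotProduct_smul, smul_smul, RCLike.star_def, RCLike.conj_mul, smul_eq_mul]
    push_cast
    ring
  have hPv := hP.dotProduct_mulVec_pos hv.2
  have hpos : (0 : 𝕜) < ((1 - ‖μ‖ ^ 2 : ℝ) : 𝕜) :=
    pos_of_mul_pos_left (hvalue ▸ hstein.dotProduct_mulVec_pos hv.2) hPv.le
  have := RCLike.ofReal_pos.1 hpos
  exact (sq_lt_one_iff₀ (norm_nonneg μ)).1 (by linarith)

theorem norm_lt_one_of_mem_spectrum_map_of_stein {P M : Matrix n n ℝ} (hP : P.PosDef)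
    (hstein : (P - Mᴴ * P * M).PosDef) {μ : 𝕜} (hμ : μ ∈ spectrum 𝕜 (M.map (algebraMap ℝ 𝕜))) :
    ‖μ‖ < 1 := by
  refine norm_lt_one_of_mem_spectrum_of_stein (posDef_map_algebraMap_s10 hP) ?_ hμ
  rw [← conjTranspose_map _ fun x ↦ by simp, ← Matrix.map_mul, ← Matrix.map_mul,
    ← Matrix.map_sub _ (map_sub _)]
  exact posDef_map_algebraMap_s10 hstein

end Stein

section ExponentialStability

theorem exists_norm_pow_le_of_spectrum_norm_lt_one {A : Type*} [NormedRing A] [NormedAlgebra ℂ A]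
    [CompleteSpace A] {a : A} (ha : ∀ μ ∈ spectrum ℂ a, ‖μ‖ < 1) :
    ∃ c ρ : ℝ, 1 ≤ c ∧ 0 < ρ ∧ ρ < 1 ∧ ∀ k : ℕ, ‖a ^ k‖ ≤ c * ρ ^ k := by
  have hradius : spectralRadius ℂ a < 1 := by
    cases subsingleton_or_nontrivial A
    · simp [spectrum.SpectralRadius.of_subsingleton]
    · exact_mod_cast spectrum.spectralRadius_lt_of_forall_lt a (r := 1) ha
  obtain ⟨ρ, hρ, hρ₁⟩ := ENNReal.lt_iff_exists_nnreal_btwn.1 hradius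
  have hρ₀ : 0 < (ρ : ℝ) := NNReal.coe_pos.2 (ENNReal.coe_pos.1 hρ.pos)
  have heventually : ∀ᶠ k : ℕ in atTop, ‖a ^ k‖ ≤ (ρ : ℝ) ^ k := by
    have hgelfand := spectrum.pow_nnnorm_pow_one_div_tendsto_nhds_spectralRadius a
    filter_upwards [hgelfand.eventually_lt_const hρ, eventually_ne_atTop 0] with k hk hk₀
    have hpow := pow_le_pow_left' hk.le k
    rw [one_div, ENNReal.rpow_inv_natCast_pow hk₀] at hpow
    exact_mod_cast hpow
  have hbigO : (fun k ↦ a ^ k) =O[atTop] fun k : ℕ ↦ (ρ : ℝ) ^ k :=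
    .of_bound 1 (heventually.mono fun k hk ↦ by simpa using hk)
  obtain ⟨C, -, hC⟩ := Asymptotics.bound_of_isBigO_nat_atTop hbigO
  refine ⟨max C 1, ρ, le_max_right _ _, hρ₀, by exact_mod_cast hρ₁, fun k ↦ ?_⟩
  calc ‖a ^ k‖ ≤ C * ‖(ρ : ℝ) ^ k‖ := hC (pow_pos hρ₀ k).ne'
    _ = C * (ρ : ℝ) ^ k := by rw [Real.norm_of_nonneg (by positivity)]
    _ ≤ max C 1 * (ρ : ℝ) ^ k := by gcongr; exact le_max_left _ _

variable {n : Type*} [Fintype n] [DecidableEq n]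

/-- Exponential stability of the discrete-time system `z (k + 1) = M z k`, measured in the
Euclidean norm. -/
def IsExponentiallyStable (M : Matrix n n ℝ) : Prop :=
  ∃ c ρ : ℝ, 1 ≤ c ∧ 0 < ρ ∧ ρ < 1 ∧ ∀ (z : EuclideanSpace ℝ n) (k : ℕ),
    ‖toEuclideanCLM (𝕜 := ℝ) (M ^ k) z‖ ≤ c * ρ ^ k * ‖z‖

theorem norm_toEuclideanCLM_le_norm_map {𝕜 : Type*} [RCLike 𝕜] (M : Matrix n n ℝ) :
    ‖toEuclideanCLM (𝕜 := ℝ) M‖ ≤ ‖toEuclideanCLM (𝕜 := 𝕜) (M.map (algebraMap ℝ 𝕜))‖ := by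
  let complexify (x : EuclideanSpace ℝ n) : EuclideanSpace 𝕜 n :=
    WithLp.toLp 2 (algebraMap ℝ 𝕜 ∘ x)
  have hnorm (x : EuclideanSpace ℝ n) : ‖complexify x‖ = ‖x‖ := by
    simp [complexify, EuclideanSpace.norm_eq]
  refine ContinuousLinearMap.opNorm_le_bound _ (norm_nonneg _) fun z ↦ ?_
  have hcomm : toEuclideanCLM (𝕜 := 𝕜) (M.map (algebraMap ℝ 𝕜)) (complexify z)
      = complexify (toEuclideanCLM (𝕜 := ℝ) M z) := by
    ext i
    exact (RingHom.map_mulVec (algebraMap ℝ 𝕜) M z.ofLp i).symm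
  rw [← hnorm, ← hcomm, ← hnorm z]
  exact ContinuousLinearMap.le_opNorm _ _

theorem isExponentiallyStable_of_spectrum_norm_lt_one {M : Matrix n n ℝ}
    (hM : ∀ μ ∈ spectrum ℂ (M.map (algebraMap ℝ ℂ)), ‖μ‖ < 1) : IsExponentiallyStable M := by
  rw [← AlgEquiv.spectrum_eq (toEuclideanCLM (n := n) (𝕜 := ℂ))] at hM
  obtain ⟨c, ρ, hc, hρ₀, hρ₁, hpow⟩ := exists_norm_pow_le_of_spectrum_norm_lt_one hM
  refine ⟨c, ρ, hc, hρ₀, hρ₁, fun z k ↦ ContinuousLinearMap.le_of_opNorm_le _ ?_ z⟩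
  calc ‖toEuclideanCLM (𝕜 := ℝ) (M ^ k)‖
      ≤ ‖toEuclideanCLM (𝕜 := ℂ) ((M ^ k).map (algebraMap ℝ ℂ))‖ :=
        norm_toEuclideanCLM_le_norm_map _
    _ = ‖toEuclideanCLM (𝕜 := ℂ) (M.map (algebraMap ℝ ℂ)) ^ k‖ := by
        rw [Matrix.map_pow, map_pow]
    _ ≤ c * ρ ^ k := hpow k

end ExponentialStability

section StateFeedback

variable {n : Type*}

/-- The matrix `A_s` of the averaged system under the feedback gains `k₁`, `k₂`, as a function of
the averaged interaction matrix `L`. -/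
noncomputable def stateFeedbackMatrix [Fintype n] [DecidableEq n] (J : Matrix n n ℝ) (k₁ k₂ : ℝ)
    (L : Matrix n n ℝ) : Matrix (n ⊕ n) (n ⊕ n) ℝ :=
  fromBlocks 0 ((1 / 2 : ℝ) • 1) (-(k₁ • (J⁻¹ * L))) (-(k₂ • (J⁻¹ * L)))

/-- The Lyapunov matrix of the closed loop: twice the undamped energy, plus a cross term of size `δ`
and the multiple `2 * δ * k₂` of `L` that cancels the off-diagonal blocks of `Aᵀ P + P A`. -/
noncomputable def stateFeedbackLyapunov (J : Matrix n n ℝ) (k₁ k₂ δ : ℝ) (L : Matrix n n ℝ) :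
    Matrix (n ⊕ n) (n ⊕ n) ℝ :=
  fromBlocks ((k₁ + 2 * δ * k₂) • L) (δ • J) (δ • J) ((1 / 2 : ℝ) • J)

variable {J L : Matrix n n ℝ} {k₁ k₂ δ : ℝ}

theorem posDef_stateFeedbackLyapunov [Finite n] (hJ : J.PosDef) (hL : L.PosDef) (hk₁ : 0 < k₁)
    (hδ : 0 < δ) (hdom : (k₂ • L - δ • J).PosDef) : (stateFeedbackLyapunov J k₁ k₂ δ L).PosDef := by
  classical
  have := Fintype.ofFinite n
  have hschur : (k₁ + 2 * δ * k₂) • L - δ • J * ((1 / 2 : ℝ) • J)⁻¹ * (δ • J)ᴴ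
      = k₁ • L + (2 * δ) • (k₂ • L - δ • J) := by
    have hdet : IsUnit J.det := hJ.det_pos.ne'.isUnit
    have hinv : ((1 / 2 : ℝ) • J)⁻¹ = (2 : ℝ) • J⁻¹ :=
      inv_eq_left_inv (by simp [smul_smul, nonsing_inv_mul J hdet])
    rw [hinv, conjTranspose_smul, star_trivial, hJ.isHermitian.eq]
    simp only [Matrix.smul_mul, Matrix.mul_smul, mul_nonsing_inv J hdet, Matrix.one_mul]
    module
  have hoff : δ • J = (δ • J)ᴴ := by rw [conjTranspose_smul, star_trivial, hJ.isHermitian.eq]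
  unfold stateFeedbackLyapunov
  nth_rw 2 [hoff]
  refine posDef_fromBlocks_of_schur₂₂ (hJ.smul (one_half_pos : (0 : ℝ) < 1 / 2)) ?_
  rw [hschur]
  exact (hL.smul hk₁).add (hdom.smul (by positivity))

variable [Fintype n] [DecidableEq n]

theorem continuous_stateFeedbackMatrix : Continuous (stateFeedbackMatrix J k₁ k₂) := by
  unfold stateFeedbackMatrix
  apply Continuous.matrix_fromBlocks <;> fun_prop

theorem neg_lyapunov_stateFeedbackMatrix (hJ : J.IsHermitian) (hdet : IsUnit J.det)
    (hL : L.IsHermitian) :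
    -((stateFeedbackMatrix J k₁ k₂ L)ᴴ * stateFeedbackLyapunov J k₁ k₂ δ L
        + stateFeedbackLyapunov J k₁ k₂ δ L * stateFeedbackMatrix J k₁ k₂ L)
      = fromBlocks ((2 * k₁ * δ) • L) 0 0 (k₂ • L - δ • J) := by
  simp only [stateFeedbackMatrix, stateFeedbackLyapunov, fromBlocks_conjTranspose,
    fromBlocks_multiply, fromBlocks_add, fromBlocks_neg, conjTranspose_neg, conjTranspose_smul,
    conjTranspose_mul, conjTranspose_nonsing_inv, conjTranspose_zero, conjTranspose_one,
    star_trivial, hJ.eq, hL.eq, Matrix.smul_mul, Matrix.mul_smul, Matrix.neg_mul,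
    Matrix.mul_neg, Matrix.one_mul, Matrix.mul_one, Matrix.zero_mul, Matrix.mul_zero,
    mul_nonsing_inv_cancel_left _ _ hdet, nonsing_inv_mul_cancel_right _ _ hdet]
  congr 1 <;> module

theorem exists_lyapunov_stateFeedbackMatrix (hJ : J.PosDef) (hL : L.PosDef) (hk₁ : 0 < k₁)
    (hk₂ : 0 < k₂) :
    ∃ P : Matrix (n ⊕ n) (n ⊕ n) ℝ, P.PosDef ∧
      (-((stateFeedbackMatrix J k₁ k₂ L)ᴴ * P + P * stateFeedbackMatrix J k₁ k₂ L)).PosDef := by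
  have hsmall : ∀ᶠ δ : ℝ in 𝓝[>] 0, (k₂ • L - δ • J).PosDef := by
    have hcont : Continuous fun δ : ℝ ↦ k₂ • L - δ • J := by fun_prop
    refine eventually_posDef_of_tendsto (hcont.tendsto 0 |>.mono_left nhdsWithin_le_nhds)
      (.of_forall fun δ ↦ ?_) (by simpa using hL.smul hk₂)
    rw [IsHermitian, conjTranspose_sub, conjTranspose_smul, conjTranspose_smul, star_trivial,
      star_trivial, hJ.isHermitian.eq, hL.isHermitian.eq]
  obtain ⟨δ, hdom, hδ⟩ := (hsmall.and self_mem_nhdsWithin).exists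
  refine ⟨_, posDef_stateFeedbackLyapunov hJ hL hk₁ hδ hdom, ?_⟩
  rw [neg_lyapunov_stateFeedbackMatrix hJ.isHermitian hJ.det_pos.ne'.isUnit hL.isHermitian,
    ← conjTranspose_zero]
  have hgain : 0 < 2 * k₁ * δ := mul_pos (by positivity) hδ
  exact posDef_fromBlocks_of_schur₂₂ hdom (by simpa using hL.smul hgain)

end StateFeedback

theorem averaged_state_feedback_stability_general {n : Type*} [Fintype n] [DecidableEq n]
    {J L₀ : Matrix n n ℝ} (hJ : J.PosDef) (hL₀ : L₀.PosDef) {k₁ k₂ : ℝ} (hk₁ : 0 < k₁)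
    (hk₂ : 0 < k₂) {L : ℝ → Matrix n n ℝ} (hL : Tendsto L (𝓝[>] 0) (𝓝 L₀)) :
    ∃ Tstar : ℝ, 0 < Tstar ∧ ∃ ε₀ : ℝ, 0 < ε₀ ∧ ∀ T : ℝ, 0 < T → T < Tstar →
      ∀ ε : ℝ, 0 < ε → ε ≤ ε₀ →
        (∀ μ ∈ spectrum ℂ
            ((1 + (ε * T) • stateFeedbackMatrix J k₁ k₂ (L T)).map (algebraMap ℝ ℂ)), ‖μ‖ < 1)
        ∧ IsExponentiallyStable (1 + (ε * T) • stateFeedbackMatrix J k₁ k₂ (L T)) := by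
  obtain ⟨P, hP, hlyap⟩ := exists_lyapunov_stateFeedbackMatrix hJ hL₀ hk₁ hk₂
  have hA : Tendsto (fun T ↦ stateFeedbackMatrix J k₁ k₂ (L T)) (𝓝[>] 0)
      (𝓝 (stateFeedbackMatrix J k₁ k₂ L₀)) :=
    (continuous_stateFeedbackMatrix.tendsto L₀).comp hL
  obtain ⟨r, hr, hstein⟩ := (nhdsGT_basis (0 : ℝ)).prod_self.eventually_iff.1
    (eventually_posDef_stein_one_add_smul hA hP.isHermitian hlyap)
  refine ⟨min r 1, by positivity, r / 2, by positivity, fun T hT₀ hT ε hε₀ hε ↦ ?_⟩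
  obtain ⟨hTr, hT₁⟩ := lt_min_iff.1 hT
  have hstep : ε * T < r := by nlinarith
  have hspectrum := fun μ ↦ norm_lt_one_of_mem_spectrum_map_of_stein (𝕜 := ℂ) (μ := μ) hP
    (@hstein (T, ε * T) ⟨⟨hT₀, hTr⟩, mul_pos hε₀ hT₀, hstep⟩)
  exact ⟨hspectrum, isExponentiallyStable_of_spectrum_norm_lt_one hspectrum⟩

/-- Theorem 1 of the paper, averaged state-feedback system. With `J, L₀`
symmetric positive definite, `k₁, k₂ > 0`, and `L : ℝ → M₃(ℝ)` continuous at `0` with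
`L 0 = L₀`, set `A_s(T) = [[0, (1/2)I₃], [−k₁J⁻¹L(T), −k₂J⁻¹L(T)]]`. Then there is
`T* > 0` such that for every `0 < T < T*` there is `ε₀ > 0` such that for all
`0 < ε ≤ ε₀` every complex eigenvalue of `I₆ + εT A_s(T)` has modulus `< 1`, and the
discrete-time system `z(k+1) = (I₆ + εT A_s(T)) z(k)` is exponentially stable. -/
theorem averaged_state_feedback_stability
    (J L₀ : Matrix (Fin 3) (Fin 3) ℝ) (hJ : J.PosDef) (hL₀ : L₀.PosDef)
    (k₁ k₂ : ℝ) (hk₁ : 0 < k₁) (hk₂ : 0 < k₂)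
    (L : ℝ → Matrix (Fin 3) (Fin 3) ℝ) (hLcont : ContinuousAt L 0) (hL0 : L 0 = L₀)
    (As : ℝ → Matrix (Fin 3 ⊕ Fin 3) (Fin 3 ⊕ Fin 3) ℝ)
    (hAs : ∀ T, As T = Matrix.fromBlocks
      (0 : Matrix (Fin 3) (Fin 3) ℝ) ((1/2 : ℝ) • (1 : Matrix (Fin 3) (Fin 3) ℝ))
      (-(k₁ • (J⁻¹ * L T))) (-(k₂ • (J⁻¹ * L T)))) :
    ∃ Tstar : ℝ, 0 < Tstar ∧ ∀ T : ℝ, 0 < T → T < Tstar →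
      ∃ ε₀ : ℝ, 0 < ε₀ ∧ ∀ ε : ℝ, 0 < ε → ε ≤ ε₀ →
        (∀ μ ∈ spectrum ℂ
            (((1 : Matrix (Fin 3 ⊕ Fin 3) (Fin 3 ⊕ Fin 3) ℝ) + (ε * T) • As T).map
              (algebraMap ℝ ℂ)),
          ‖μ‖ < 1)
        ∧ ∃ c ρ : ℝ, 1 ≤ c ∧ 0 < ρ ∧ ρ < 1 ∧
            ∀ (z : EuclideanSpace ℝ (Fin 3 ⊕ Fin 3)) (k : ℕ),
              ‖Matrix.toEuclideanCLM (𝕜 := ℝ)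
                  (((1 : Matrix (Fin 3 ⊕ Fin 3) (Fin 3 ⊕ Fin 3) ℝ) + (ε * T) • As T) ^ k) z‖
                ≤ c * ρ ^ k * ‖z‖ := by
  obtain rfl : As = fun T ↦ stateFeedbackMatrix J k₁ k₂ (L T) := funext hAs
  obtain ⟨Tstar, hTstar, ε₀, hε₀, hstable⟩ := averaged_state_feedback_stability_general hJ hL₀ hk₁
    hk₂ (hL0 ▸ hLcont.tendsto.mono_left nhdsWithin_le_nhds)
  exact ⟨Tstar, hTstar, fun T hT₀ hT ↦ ⟨ε₀, hε₀, hstable T hT₀ hT⟩⟩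
end

section
/- Fix real constants μ > 0, R > 0, n > 0, φ₀, incl, Ω. Let m̂ = (0, 0, −1) ∈ ℝ³, let M be the product of the rotation by angle Ω about the z-axis with the rotation by angle incl about the x-axis, let r̂(t) = M · (cos(n t + φ₀), sin(n t + φ₀), 0) ∈ ℝ³, and define B(t) = (μ / R³) (3 (m̂ · r̂(t)) r̂(t) − m̂). Then the symmetric positive semidefinite matrix ∫₀^{2π/n} B(t)^× (B(t)^×)ᵀ dt is positive definite if and only if sin(incl) ≠ 0. -/
open Matrix

/-- The skew-symmetric matrix `a^×` associated with `a ∈ ℝ³`, satisfying `a^× b = a × b`. -/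
def crossMat (a : Fin 3 → ℝ) : Matrix (Fin 3) (Fin 3) ℝ :=
  !![0, -a 2, a 1; a 2, 0, -a 0; -a 1, a 0, 0]

/-!
The kernel of `∫ B^× (B^×)ᵀ` consists of the vectors `x` with `B(t) × x = 0` for all `t`, so the
average is singular exactly when the field keeps a fixed direction. Write the orbit as
`r(θ) = cos θ u + sin θ v` and put `p = m · u`, `q = m · v`. If `p = q = 0`, the dipole field is
constantly `-m`. Otherwise, with `P = u × x`, `Q = v × x` and `W = m × x`, the condition on `x`
reads `3 (cos θ p + sin θ q) (cos θ P + sin θ Q) = W` for all `θ`: a quadratic form is constant on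
the unit circle, so `3 p P = 3 q Q = W` and `p Q + q P = 0`. Hence `(p² + q²) P = 0` and
`(p² + q²) Q = 0`, so `x` is parallel to both `u` and `v` and must vanish.
-/

section MatrixIntegral

open MeasureTheory Set

variable {α ι κ : Type*} [MeasurableSpace α] {μ : Measure α}

theorem integrable_dotProduct_mulVec [Fintype ι] [Fintype κ] {A : α → Matrix ι κ ℝ}
    (hA : ∀ i j, Integrable (fun t => A t i j) μ) (x : ι → ℝ) (y : κ → ℝ) :
    Integrable (fun t => x ⬝ᵥ (A t *ᵥ y)) μ :=
  integrable_finsetSum _ fun i _ =>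
    (integrable_finsetSum _ fun j _ => (hA i j).mul_const (y j)).const_mul (x i)

theorem dotProduct_integral_mulVec [Fintype ι] [Fintype κ] {A : α → Matrix ι κ ℝ}
    (hA : ∀ i j, Integrable (fun t => A t i j) μ) (x : ι → ℝ) (y : κ → ℝ) :
    x ⬝ᵥ ((Matrix.of fun i j => ∫ t, A t i j ∂μ) *ᵥ y) = ∫ t, x ⬝ᵥ (A t *ᵥ y) ∂μ := by
  have hAy (i : ι) (j : κ) : Integrable (fun t => A t i j * y j) μ := (hA i j).mul_const (y j)
  simp only [dotProduct, mulVec, Matrix.of_apply]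
  rw [integral_finsetSum _ fun i _ => (integrable_finsetSum _ fun j _ => hAy i j).const_mul (x i)]
  refine Finset.sum_congr rfl fun i _ => ?_
  rw [integral_const_mul, integral_finsetSum _ fun j _ => hAy i j]
  simp only [integral_mul_const]

variable {G : α → Matrix ι ι ℝ}

theorem posSemidef_integral [Finite ι] (hG : ∀ i j, Integrable (fun t => G t i j) μ)
    (hpos : ∀ᵐ t ∂μ, (G t).PosSemidef) :
    (Matrix.of fun i j => ∫ t, G t i j ∂μ).PosSemidef := by
  have := Fintype.ofFinite ι
  refine .of_dotProduct_mulVec_nonneg ?_ fun x => ?_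
  · ext i j
    exact integral_congr_ae (hpos.mono fun t ht => ht.isHermitian.apply i j)
  · rw [dotProduct_integral_mulVec hG]
    exact integral_nonneg_of_ae (hpos.mono fun t ht => ht.dotProduct_mulVec_nonneg x)

theorem integral_mulVec_eq_zero_iff [Fintype ι] (hG : ∀ i j, Integrable (fun t => G t i j) μ)
    (hpos : ∀ᵐ t ∂μ, (G t).PosSemidef) (x : ι → ℝ) :
    (Matrix.of fun i j => ∫ t, G t i j ∂μ) *ᵥ x = 0 ↔ ∀ᵐ t ∂μ, G t *ᵥ x = 0 := by
  rw [← (posSemidef_integral hG hpos).dotProduct_mulVec_zero_iff, dotProduct_integral_mulVec hG,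
    integral_eq_zero_iff_of_nonneg_ae (hpos.mono fun t ht => ht.dotProduct_mulVec_nonneg x)
      (integrable_dotProduct_mulVec hG _ x)]
  exact Filter.eventually_congr (hpos.mono fun t ht => ht.dotProduct_mulVec_zero_iff x)

theorem posDef_integral_iff [Fintype ι] (hG : ∀ i j, Integrable (fun t => G t i j) μ)
    (hpos : ∀ᵐ t ∂μ, (G t).PosSemidef) :
    (Matrix.of fun i j => ∫ t, G t i j ∂μ).PosDef ↔
      ∀ x, (∀ᵐ t ∂μ, G t *ᵥ x = 0) → x = 0 := by
  classical
  rw [(posSemidef_integral hG hpos).posDef_iff_isUnit, ← mulVec_injective_iff_isUnit,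
    ← coe_mulVecLin, ← LinearMap.ker_eq_bot, LinearMap.ker_eq_bot']
  exact forall_congr' fun x => imp_congr_left (integral_mulVec_eq_zero_iff hG hpos x)

end MatrixIntegral

section PeriodAverage

open MeasureTheory Set

variable {T : ℝ}

theorem ae_restrict_Ioc_eq_iff_of_periodic {E : Type*} [TopologicalSpace E] [T2Space E]
    {f : ℝ → E} {c : E} (hf : Continuous f) (hper : Function.Periodic f T) (hT : 0 < T) :
    (∀ᵐ t ∂volume.restrict (Ioc 0 T), f t = c) ↔ ∀ t, f t = c := by
  refine ⟨fun h t => ?_, Filter.Eventually.of_forall⟩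
  obtain ⟨s, hs, hts⟩ := hper.exists_mem_Ioc hT t 0
  rw [zero_add] at hs
  rw [hts]
  exact Measure.eqOn_Ioc_of_ae_eq volume h hf.continuousOn continuousOn_const hs

variable {ι : Type*} {G : ℝ → Matrix ι ι ℝ}

theorem integrable_restrict_Ioc_matrix_apply (hG : Continuous G) (i j : ι) :
    Integrable (fun t => G t i j) (volume.restrict (Ioc 0 T)) :=
  (hG.matrix_elem i j).integrableOn_Ioc

theorem posSemidef_intervalIntegral [Finite ι] (hG : Continuous G)
    (hpos : ∀ t, (G t).PosSemidef) (hT : 0 ≤ T) :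
    (Matrix.of fun i j => ∫ t in (0 : ℝ)..T, G t i j).PosSemidef := by
  simp only [intervalIntegral.integral_of_le hT]
  exact posSemidef_integral (integrable_restrict_Ioc_matrix_apply hG) (.of_forall hpos)

theorem posDef_intervalIntegral_iff_of_periodic [Fintype ι] (hG : Continuous G)
    (hpos : ∀ t, (G t).PosSemidef) (hper : Function.Periodic G T) (hT : 0 < T) :
    (Matrix.of fun i j => ∫ t in (0 : ℝ)..T, G t i j).PosDef ↔
      ∀ x, (∀ t, G t *ᵥ x = 0) → x = 0 := by
  simp only [intervalIntegral.integral_of_le hT.le]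
  rw [posDef_integral_iff (integrable_restrict_Ioc_matrix_apply hG) (.of_forall hpos)]
  exact forall_congr' fun x => imp_congr_left <| ae_restrict_Ioc_eq_iff_of_periodic
    (hG.matrix_mulVec continuous_const) (hper.comp (· *ᵥ x)) hT

end PeriodAverage

section CrossMat

theorem crossMat_mulVec (a x : Fin 3 → ℝ) : crossMat a *ᵥ x = a ⨯₃ x := by
  rw [cross_apply]
  ext i
  fin_cases i <;> simp [crossMat, mulVec, dotProduct, Fin.sum_univ_three] <;> ring

theorem crossMat_transpose (a : Fin 3 → ℝ) : (crossMat a)ᵀ = -crossMat a := by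
  ext i j
  fin_cases i <;> fin_cases j <;> simp [crossMat]

theorem posSemidef_crossMat_mul_transpose (a : Fin 3 → ℝ) :
    (crossMat a * (crossMat a)ᵀ).PosSemidef := by
  simpa only [conjTranspose_eq_transpose_of_trivial]
    using posSemidef_self_mul_conjTranspose (crossMat a)

theorem crossMat_mul_transpose_mulVec_eq_zero_iff (a x : Fin 3 → ℝ) :
    (crossMat a * (crossMat a)ᵀ) *ᵥ x = 0 ↔ a ⨯₃ x = 0 := by
  rw [← conjTranspose_eq_transpose_of_trivial, self_mul_conjTranspose_mulVec_eq_zero,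
    conjTranspose_eq_transpose_of_trivial, crossMat_transpose, neg_mulVec, neg_eq_zero,
    crossMat_mulVec]

theorem continuous_crossMat : Continuous crossMat := by
  unfold crossMat
  fun_prop

variable {b : ℝ → Fin 3 → ℝ} {T : ℝ}

theorem posSemidef_intervalIntegral_crossMat (hb : Continuous b) (hT : 0 ≤ T) :
    (Matrix.of fun i j =>
      ∫ t in (0 : ℝ)..T, (crossMat (b t) * (crossMat (b t))ᵀ) i j).PosSemidef :=
  have hG := continuous_crossMat.comp hb
  posSemidef_intervalIntegral (hG.matrix_mul hG.matrix_transpose)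
    (fun t => posSemidef_crossMat_mul_transpose (b t)) hT

theorem posDef_intervalIntegral_crossMat_iff (hb : Continuous b) (hper : Function.Periodic b T)
    (hT : 0 < T) :
    (Matrix.of fun i j =>
      ∫ t in (0 : ℝ)..T, (crossMat (b t) * (crossMat (b t))ᵀ) i j).PosDef ↔
      ∀ x, (∀ t, b t ⨯₃ x = 0) → x = 0 := by
  have hG : Continuous fun t => crossMat (b t) := continuous_crossMat.comp hb
  simpa only [crossMat_mul_transpose_mulVec_eq_zero_iff] using
    posDef_intervalIntegral_iff_of_periodic (hG.matrix_mul hG.matrix_transpose)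
      (fun t => posSemidef_crossMat_mul_transpose (b t))
      (hper.comp fun a => crossMat a * (crossMat a)ᵀ) hT

end CrossMat

section Dipole

/-- The field at position `r` of a dipole with moment `m`, for `|r| = 1` and up to the strength of
the dipole; the factor `μ / R ^ 3` of the physical field is kept outside. -/
def dipoleField (m r : Fin 3 → ℝ) : Fin 3 → ℝ :=
  (3 * (m ⬝ᵥ r)) • r - m

/-- The point of phase `θ` on the ellipse centred at the origin with conjugate semi-diameters `u`
and `v`; for orthonormal `u` and `v` this is the unit circle in the orbital plane. -/
noncomputable def orbitPoint (u v : Fin 3 → ℝ) (θ : ℝ) : Fin 3 → ℝ :=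
  Real.cos θ • u + Real.sin θ • v

theorem orbitPoint_periodic (u v : Fin 3 → ℝ) :
    Function.Periodic (orbitPoint u v) (2 * Real.pi) := fun θ => by
  simp only [orbitPoint, Real.cos_add_two_pi, Real.sin_add_two_pi]

theorem continuous_orbitPoint (u v : Fin 3 → ℝ) : Continuous (orbitPoint u v) := by
  unfold orbitPoint
  fun_prop

theorem continuous_dipoleField (m : Fin 3 → ℝ) : Continuous (dipoleField m) := by
  unfold dipoleField
  fun_prop

theorem dipoleField_orbitPoint_cross (m u v x : Fin 3 → ℝ) (θ : ℝ) :
    dipoleField m (orbitPoint u v θ) ⨯₃ x =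
      (3 * (Real.cos θ * (m ⬝ᵥ u) + Real.sin θ * (m ⬝ᵥ v))) •
        (Real.cos θ • (u ⨯₃ x) + Real.sin θ • (v ⨯₃ x)) - m ⨯₃ x := by
  simp only [dipoleField, orbitPoint, dotProduct_add, dotProduct_smul, smul_eq_mul, map_sub,
    map_add, map_smul, LinearMap.sub_apply, LinearMap.add_apply, LinearMap.smul_apply]

theorem dipoleField_orbitPoint_cross_normal {m u v : Fin 3 → ℝ} (hu : m ⬝ᵥ u = 0)
    (hv : m ⬝ᵥ v = 0) (θ : ℝ) : dipoleField m (orbitPoint u v θ) ⨯₃ (u ⨯₃ v) = 0 := by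
  have hm : m ⨯₃ (u ⨯₃ v) = 0 := by
    rw [cross_cross_eq_smul_sub_smul', dotProduct_comm u m, hu, hv, zero_smul, zero_smul, sub_zero]
  rw [dipoleField_orbitPoint_cross, hu, hv, hm]
  simp only [mul_zero, add_zero, zero_smul, sub_zero]

theorem eq_zero_of_forall_cos_sin_smul_eq {E : Type*} [AddCommGroup E] [Module ℝ E] {p q : ℝ}
    {P Q W : E} (hpq : ¬(p = 0 ∧ q = 0))
    (h : ∀ θ : ℝ, (Real.cos θ * p + Real.sin θ * q) • (Real.cos θ • P + Real.sin θ • Q) = W) :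
    P = 0 ∧ Q = 0 := by
  have hP : p • P = W := by simpa using h 0
  have hQ : q • Q = W := by simpa using h (Real.pi / 2)
  have hmixed : p • Q + q • P = 0 := by
    have hsq : (√2 / 2 : ℝ) * (√2 / 2) = 1 / 2 := by
      rw [div_mul_div_comm, Real.mul_self_sqrt zero_le_two]
      norm_num
    have h45 := h (Real.pi / 4)
    rw [Real.cos_pi_div_four, Real.sin_pi_div_four, ← mul_add, ← smul_add, smul_smul,
      mul_right_comm, hsq] at h45
    linear_combination (norm := module) (2 : ℝ) • h45 - hP - hQ
  have hne : p * p + q * q ≠ 0 := fun h0 => hpq (mul_self_add_mul_self_eq_zero.1 h0)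
  have hP0 : (p * p + q * q) • P = 0 := by
    linear_combination (norm := module) p • hP - p • hQ + q • hmixed
  have hQ0 : (p * p + q * q) • Q = 0 := by
    linear_combination (norm := module) q • hQ - q • hP + p • hmixed
  exact ⟨(smul_eq_zero.1 hP0).resolve_left hne, (smul_eq_zero.1 hQ0).resolve_left hne⟩

theorem eq_zero_of_cross_eq_zero {F : Type*} [Field F] {u v x : Fin 3 → F}
    (huv : LinearIndependent F ![u, v]) (hu : u ⨯₃ x = 0) (hv : v ⨯₃ x = 0) : x = 0 := by
  by_contra hx
  have hparallel {w : Fin 3 → F} (hw : w ⨯₃ x = 0) : ∃ a : F, a • x = w := by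
    by_contra! hne
    exact crossProduct_ne_zero_iff_linearIndependent.2 ((LinearIndependent.pair_iff' hx).2 hne)
      (by rw [← cross_anticomm, hw, neg_zero])
  obtain ⟨a, rfl⟩ := hparallel hu
  obtain ⟨b, rfl⟩ := hparallel hv
  exact crossProduct_ne_zero_iff_linearIndependent.2 huv (by simp)

theorem forall_dipoleField_cross_imp_eq_zero_iff (m : Fin 3 → ℝ) {u v : Fin 3 → ℝ}
    (huv : LinearIndependent ℝ ![u, v]) :
    (∀ x, (∀ θ, dipoleField m (orbitPoint u v θ) ⨯₃ x = 0) → x = 0) ↔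
      ¬(m ⬝ᵥ u = 0 ∧ m ⬝ᵥ v = 0) := by
  refine ⟨fun h ⟨hu, hv⟩ => ?_, fun hm x hx => ?_⟩
  · exact crossProduct_ne_zero_iff_linearIndependent.2 huv
      (h _ (dipoleField_orbitPoint_cross_normal hu hv))
  · simp only [dipoleField_orbitPoint_cross, sub_eq_zero] at hx
    have hthird (θ : ℝ) : (Real.cos θ * (m ⬝ᵥ u) + Real.sin θ * (m ⬝ᵥ v)) •
        (Real.cos θ • (u ⨯₃ x) + Real.sin θ • (v ⨯₃ x)) = (3 : ℝ)⁻¹ • (m ⨯₃ x) := by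
      rw [← hx θ, mul_smul, inv_smul_smul₀ three_ne_zero]
    obtain ⟨hu, hv⟩ := eq_zero_of_forall_cos_sin_smul_eq hm hthird
    exact eq_zero_of_cross_eq_zero huv hu hv

theorem dipole_average_posDef_iff_general {k ω : ℝ} (φ : ℝ) (m : Fin 3 → ℝ) {u v : Fin 3 → ℝ}
    (hk : k ≠ 0) (hω : 0 < ω) (huv : LinearIndependent ℝ ![u, v]) :
    let B : ℝ → Fin 3 → ℝ := fun t => k • dipoleField m (orbitPoint u v (ω * t + φ))
    (Matrix.of fun i j =>
        ∫ t in (0 : ℝ)..(2 * Real.pi / ω), (crossMat (B t) * (crossMat (B t))ᵀ) i j).PosSemidef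
    ∧ ((Matrix.of fun i j =>
        ∫ t in (0 : ℝ)..(2 * Real.pi / ω), (crossMat (B t) * (crossMat (B t))ᵀ) i j).PosDef
      ↔ ¬(m ⬝ᵥ u = 0 ∧ m ⬝ᵥ v = 0)) := by
  intro B
  have hT : 0 < 2 * Real.pi / ω := by positivity
  have hB : Continuous B := ((continuous_dipoleField m).comp
    ((continuous_orbitPoint u v).comp (by fun_prop))).const_smul k
  have hper : Function.Periodic B (2 * Real.pi / ω) := fun t => by
    have hphase : ω * (t + 2 * Real.pi / ω) + φ = ω * t + φ + 2 * Real.pi := by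
      field_simp
      ring
    simp only [B, hphase, orbitPoint_periodic u v _]
  have hphase_surj : Function.Surjective fun t => ω * t + φ := fun θ =>
    ⟨(θ - φ) / ω, by field_simp; ring⟩
  refine ⟨posSemidef_intervalIntegral_crossMat hB hT.le, ?_⟩
  rw [posDef_intervalIntegral_crossMat_iff hB hper hT,
    ← forall_dipoleField_cross_imp_eq_zero_iff m huv]
  refine forall_congr' fun x => imp_congr_left ?_
  simp only [B, map_smul, LinearMap.smul_apply, smul_eq_zero, hk, false_or]
  exact (hphase_surj.forall (p := fun θ => dipoleField m (orbitPoint u v θ) ⨯₃ x = 0)).symm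

end Dipole

section OrbitFrame

/-- The rotation taking the equatorial plane to the orbital plane of inclination `i` and right
ascension of the ascending node `Ω`: a rotation by `i` about the first axis followed by one by `Ω`
about the third. Column `0` points to the ascending node. -/
noncomputable def orbitFrame (Ω i : ℝ) : Matrix (Fin 3) (Fin 3) ℝ :=
  !![Real.cos Ω, -Real.sin Ω, 0; Real.sin Ω, Real.cos Ω, 0; 0, 0, 1] *
    !![1, 0, 0; 0, Real.cos i, -Real.sin i; 0, Real.sin i, Real.cos i]

theorem det_orbitFrame (Ω i : ℝ) : (orbitFrame Ω i).det = 1 := by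
  rw [orbitFrame, det_mul, det_fin_three, det_fin_three]
  simp [← sq]

theorem linearIndependent_orbitFrame_col (Ω i : ℝ) :
    LinearIndependent ℝ ![(orbitFrame Ω i).col 0, (orbitFrame Ω i).col 1] := by
  have hcols := linearIndependent_cols_of_det_ne_zero (det_orbitFrame Ω i ▸ one_ne_zero)
  have hpair : ![(orbitFrame Ω i).col 0, (orbitFrame Ω i).col 1] =
      (orbitFrame Ω i).col ∘ ![0, 1] := by
    ext j
    fin_cases j <;> rfl
  rw [hpair]
  exact hcols.comp _ (by decide)

theorem mulVec_cos_sin_zero (M : Matrix (Fin 3) (Fin 3) ℝ) (θ : ℝ) :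
    M *ᵥ ![Real.cos θ, Real.sin θ, 0] = orbitPoint (M.col 0) (M.col 1) θ := by
  ext j
  simp [orbitPoint, mulVec, dotProduct, Fin.sum_univ_three, mul_comm]

theorem south_dotProduct_orbitFrame_col_eq_zero_iff (Ω i : ℝ) :
    ![0, 0, -1] ⬝ᵥ (orbitFrame Ω i).col 0 = 0 ∧ ![0, 0, -1] ⬝ᵥ (orbitFrame Ω i).col 1 = 0 ↔
      Real.sin i = 0 := by
  simp [orbitFrame, dotProduct, Fin.sum_univ_three]

end OrbitFrame

/-- For the dipole geomagnetic field `B` along a circular orbit of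
inclination `incl` (with `mhat = (0,0,−1)`, `M = R_z(Ω) R_x(incl)`,
`rhat(t) = M (cos(nt+φ₀), sin(nt+φ₀), 0)`,
`B(t) = (μ/R³)(3(mhat·rhat(t))rhat(t) − mhat)`), the symmetric positive semidefinite
matrix `∫₀^{2π/n} B(t)^× (B(t)^×)ᵀ dt` is positive definite if and only if
`sin(incl) ≠ 0`. -/
theorem dipole_average_posDef_iff (μm R n φ₀ incl Ω : ℝ)
    (hμ : 0 < μm) (hR : 0 < R) (hn : 0 < n) :
    let mhat : Fin 3 → ℝ := ![0, 0, -1]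
    let M : Matrix (Fin 3) (Fin 3) ℝ :=
      !![Real.cos Ω, -Real.sin Ω, 0; Real.sin Ω, Real.cos Ω, 0; 0, 0, 1] *
        !![1, 0, 0; 0, Real.cos incl, -Real.sin incl; 0, Real.sin incl, Real.cos incl]
    let rhat : ℝ → Fin 3 → ℝ :=
      fun t => M *ᵥ ![Real.cos (n * t + φ₀), Real.sin (n * t + φ₀), 0]
    let B : ℝ → Fin 3 → ℝ :=
      fun t => (μm / R ^ 3) • ((3 * (mhat ⬝ᵥ rhat t)) • rhat t - mhat)
    (Matrix.of fun i j =>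
        ∫ t in (0 : ℝ)..(2 * Real.pi / n), (crossMat (B t) * (crossMat (B t))ᵀ) i j).PosSemidef
    ∧ ((Matrix.of fun i j =>
        ∫ t in (0 : ℝ)..(2 * Real.pi / n),
          (crossMat (B t) * (crossMat (B t))ᵀ) i j).PosDef
      ↔ Real.sin incl ≠ 0) := by
  have h := dipole_average_posDef_iff_general φ₀ ![0, 0, -1] (div_pos hμ (pow_pos hR 3)).ne' hn
    (linearIndependent_orbitFrame_col Ω incl)
  simp only [← mulVec_cos_sin_zero, south_dotProduct_orbitFrame_col_eq_zero_iff] at h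
  exact h
end
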